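/- arXiv:2604.06031 — 3 statements merged into one kernel-verified Lean document; each statement's English description precedes it below -/
import Mathlib

section
/- Let ρ be a map as above such that (K, ⊴_ρ) is a 3-ladder. Then (K, ⊴_ρ) is a maximal 3-ladder if and only if the family {ρ(0,α) : 0 < α < ω1} is a dominating family in ω^ω. -/
/-- The first uncountable ordinal `ω₁`, as the type of ordinals `< ω₁`. -/
abbrev Omega1 : Type 1 := {o : Ordinal // o < (Cardinal.aleph 1).ord}

/-- The ordinal `0` as an element of `ω₁`. -/
def omega1Zero : Omega1 :=
  ⟨0, by rw [Cardinal.lt_ord]; simpa using Cardinal.aleph_pos 1⟩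

/-- The underlying set `K = {0} ∪ (ω₁ × ω × ω)`; `none` plays the role of `0`. -/
abbrev KType : Type 1 := Option (Omega1 × ℕ × ℕ)

/-- The relation `⊴_ρ` on `K` induced by `ρ`: `0 ⊴ x` for all `x`, and
`(α,n,m) ⊴ (β,n',m')` iff `α ≤ β`, `n ≤ n'`, `m ≤ m'` and `ρ α β n ≤ m'`. -/
def KRel (ρ : Omega1 → Omega1 → ℕ → ℕ) : KType → KType → Prop
  | none, _ => True
  | some _, none => False
  | some (α, n, m), some (β, n', m') => α ≤ β ∧ n ≤ n' ∧ m ≤ m' ∧ ρ α β n ≤ m'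

/-- The strict version of a relation. -/
def RelLt {X : Type*} (r : X → X → Prop) (x y : X) : Prop := r x y ∧ x ≠ y

/-- `z` is a lower cover of `x` with respect to the relation `r`. -/
def RelCovBy {X : Type*} (r : X → X → Prop) (z x : X) : Prop :=
  RelLt r z x ∧ ∀ y, ¬ (RelLt r z y ∧ RelLt r y x)

/-- `(X, r)` is an `n`-ladder: `r` is a partial order in which every pair of
elements has a least upper bound and a greatest lower bound (a lattice), which
is lower finite, and in which every element has at most `n` lower covers. -/
def RelIsNLadder {X : Type*} (r : X → X → Prop) (n : ℕ) : Prop :=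
  IsPartialOrder X r ∧
  (∀ x y : X, ∃ z, r x z ∧ r y z ∧ ∀ w, r x w → r y w → r z w) ∧
  (∀ x y : X, ∃ z, r z x ∧ r z y ∧ ∀ w, r w x → r w y → r w z) ∧
  (∀ x : X, {y : X | r y x}.Finite) ∧
  (∀ x : X, {z : X | RelCovBy r z x}.ncard ≤ n)

/-- `P` is an `n`-ladder: a nonempty lower finite lattice in which every element
has at most `n` lower covers. -/
def IsNLadder (P : Type*) [Lattice P] (n : ℕ) : Prop :=
  Nonempty P ∧ (∀ x : P, (Set.Iic x).Finite) ∧ ∀ x : P, {y : P | y ⋖ x}.ncard ≤ n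

/-- `(X, r)` is a maximal `n`-ladder: an `n`-ladder which is not
order-isomorphic to a proper ideal of any `n`-ladder. -/
def RelIsMaximalNLadder {X : Type 1} (r : X → X → Prop) (n : ℕ) : Prop :=
  RelIsNLadder r n ∧
    ¬ ∃ (Q : Type 1) (_ : Lattice Q) (I : Order.Ideal Q),
        IsNLadder Q n ∧ I.IsProper ∧
        ∃ e : X ≃ ↥I, ∀ x y : X, r x y ↔ e x ≤ e y

/-- `D` is a dominating family in `ω^ω`: every `f : ω → ω` is eventually
strictly below some member of `D`. -/
def IsDominating (D : Set (ℕ → ℕ)) : Prop :=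
  ∀ f : ℕ → ℕ, ∃ g ∈ D, ∀ᶠ k in Filter.atTop, f k < g k

theorem aux_breadth {Q : Type*} [Lattice Q] (hQ : IsNLadder Q 3) (z y : Fin 4 → Q)
    (h1 : ∀ i j, j ≠ i → z j ≤ y i) (h2 : ∀ i, ¬ z i ≤ y i) : False := by
  obtain ⟨-, hfin, hcov⟩ := hQ
  let t : Q := Finset.univ.sup' ⟨0, Finset.mem_univ _⟩ z
  have hzt : ∀ i, z i ≤ t := fun i => Finset.le_sup' z (Finset.mem_univ i)
  have ht : ∀ c, (∀ i, z i ≤ c) → t ≤ c := fun c hc => Finset.sup'_le _ _ (fun i _ => hc i)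
  have hc : ∀ i, ∃ c, c ⋖ t ∧ y i ⊓ t ≤ c := by
    intro i
    have hlt : y i ⊓ t < t := by
      refine lt_of_le_of_ne inf_le_right ?_
      intro h
      exact h2 i ((hzt i).trans (h ▸ inf_le_left))
    have hf : (Set.Ico (y i ⊓ t) t).Finite :=
      (hfin t).subset (fun a ha => ha.2.le)
    obtain ⟨c, hc1, hc2⟩ := hf.exists_le_maximal (Set.left_mem_Ico.2 hlt)
    refine ⟨c, ⟨hc2.prop.2, ?_⟩, hc1⟩
    intro d hcd hdt
    exact hcd.not_ge (hc2.le_of_ge ⟨hc1.trans hcd.le, hdt⟩ hcd.le)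
  choose c hc1 hc2 using hc
  have hinj : Function.Injective c := by
    intro i j hij
    by_contra hne
    have : t ≤ c i := by
      apply ht
      intro k
      by_cases hk : k = i
      · subst hk
        rw [hij]
        exact (le_inf (h1 j k hne) (hzt k)).trans (hc2 j)
      · exact (le_inf (h1 i k hk) (hzt k)).trans (hc2 i)
    exact (hc1 i).1.not_ge this
  have hsub : Set.range c ⊆ {a | a ⋖ t} := by
    rintro _ ⟨i, rfl⟩; exact hc1 i
  have hf : {a | a ⋖ t}.Finite := (hfin t).subset (fun a ha => ha.1.le)
  have h3 := Set.ncard_le_ncard hsub hf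
  have h4 : (Set.range c).ncard = 4 := by
    rw [← Set.image_univ, Set.ncard_image_of_injective _ hinj]
    simp [Set.ncard_univ]
  have := hcov t
  omega

theorem aux_join (ρ : Omega1 → Omega1 → ℕ → ℕ)
    (hdiag : ∀ α : Omega1, ∀ n : ℕ, ρ α α n = 0)
    (hladder : RelIsNLadder (KRel ρ) 3) (α β : Omega1) (hab : α ≤ β) (n m n' m' : ℕ) (w : KType)
    (h1 : KRel ρ (some (α, n, m)) w) (h2 : KRel ρ (some (β, n', m')) w) :
    KRel ρ (some (β, max n n', max (max m m') (ρ α β n))) w := by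
  obtain ⟨hp, hj, -, -, -⟩ := hladder
  obtain ⟨z, hz1, hz2, hz3⟩ := hj (some (α, n, m)) (some (β, n', m'))
  have htr : ∀ a b c, KRel ρ a b → KRel ρ b c → KRel ρ a c := fun a b c => hp.trans a b c
  refine htr _ z _ ?_ (hz3 w h1 h2)
  have hz := hz3 (some (β, max n n', max (max m m') (ρ α β n)))
    (by simp [KRel, hab]) (by simp [KRel, hdiag])
  match z, hz1, hz2, hz with
  | some (γ, a, b), hz1, hz2, hz =>
    simp only [KRel] at hz1 hz2 hz ⊢
    obtain rfl : γ = β := le_antisymm hz.1 hz2.1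
    simp [hdiag]
    omega

theorem aux_uncountable : Uncountable Omega1 := by
  rw [← Cardinal.aleph0_lt_mk_iff]
  have h : Cardinal.mk Omega1 = Cardinal.lift.{1, 0} (Cardinal.aleph.{0} 1) := by
    have := Cardinal.mk_Iio_ordinal (Cardinal.aleph.{0} 1).ord
    rw [Cardinal.card_ord] at this
    exact this
  rw [h]
  simp

theorem aux_dom_max (ρ : Omega1 → Omega1 → ℕ → ℕ)
    (hdiag : ∀ α : Omega1, ∀ n : ℕ, ρ α α n = 0)
    (hladder : RelIsNLadder (KRel ρ) 3)
    (hdom : IsDominating {g : ℕ → ℕ | ∃ α : Omega1, omega1Zero < α ∧ g = ρ omega1Zero α}) :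
    RelIsMaximalNLadder (KRel ρ) 3 := by
  refine ⟨hladder, ?_⟩
  rintro ⟨Q, _, I, hQ, hI, e, he⟩
  have hjoin := aux_join ρ hdiag hladder
  obtain ⟨x, hx⟩ : ∃ x, x ∉ I := by
    by_contra! h
    exact hI.ne_univ (Set.eq_univ_of_forall h)
  have h0 : ∀ α : Omega1, omega1Zero ≤ α := fun α => Subtype.coe_le_coe.1 (zero_le (a := α.1))
  let E : Omega1 → ℕ → ℕ → Q := fun α n m => (e (some (α, n, m)) : Q)
  have hE : ∀ α n m β n' m', E α n m ≤ E β n' m' ↔ KRel ρ (some (α, n, m)) (some (β, n', m')) := by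
    intro α n m β n' m'
    exact (he _ _).symm
  have hEI : ∀ α n m, E α n m ∈ I := fun α n m => (e _).2
  have hEj : ∀ α β n m n' m' q, α ≤ β → E α n m ≤ q → E β n' m' ≤ q →
      E β (max n n') (max (max m m') (ρ α β n)) ≤ q := by
    intro α β n m n' m' q hab ha hb
    have hI2 : E α n m ⊔ E β n' m' ∈ I := Order.Ideal.sup_mem (hEI _ _ _) (hEI _ _ _)
    obtain ⟨k, hk⟩ := e.surjective ⟨_, hI2⟩
    have hk' : (e k : Q) = E α n m ⊔ E β n' m' := by rw [hk]
    have := hjoin α β hab n m n' m' k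
      ((he _ _).2 (by change E α n m ≤ (e k : Q); rw [hk']; exact le_sup_left))
      ((he _ _).2 (by change E β n' m' ≤ (e k : Q); rw [hk']; exact le_sup_right))
    have h3 : E β (max n n') (max (max m m') (ρ α β n)) ≤ (e k : Q) := (he _ _).1 this
    exact h3.trans (hk' ▸ sup_le ha hb)
  have hEinj : ∀ α n m β n' m', E α n m = E β n' m' → α = β ∧ n = n' ∧ m = m' := by
    intro α n m β n' m' h
    have := e.injective (Subtype.ext h)
    simpa using this
  have hmono : ∀ α n m n' m', n ≤ n' → m ≤ m' → E α n m ≤ E α n' m' := by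
    intro α n m n' m' h h'
    rw [hE]; simp [KRel, hdiag, h, h']
  obtain ⟨-, hfin, -⟩ := id hQ
  set o := omega1Zero with ho
  -- choice of α0
  obtain ⟨α0, hα0⟩ : ∃ α0, ∀ n m, ¬ E α0 0 0 ≤ x ⊔ E o n m := by
    by_contra! h
    have hc : (⋃ p : ℕ × ℕ, {α | E α 0 0 ≤ x ⊔ E o p.1 p.2}).Countable := by
      refine Set.countable_iUnion (fun p => Set.Finite.countable ?_)
      refine Set.Finite.preimage (f := fun α => E α 0 0) ?_ (hfin (x ⊔ E o p.1 p.2))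
      intro a _ b _ hab
      exact (hEinj _ _ _ _ _ _ hab).1
    have hu : (⋃ p : ℕ × ℕ, {α | E α 0 0 ≤ x ⊔ E o p.1 p.2}) = Set.univ := by
      refine Set.eq_univ_of_forall fun α => ?_
      obtain ⟨n, m, hnm⟩ := h α
      exact Set.mem_iUnion.2 ⟨(n, m), hnm⟩
    rw [hu, Set.countable_univ_iff] at hc
    exact (not_countable_iff.2 aux_uncountable) hc
  have hF : ∀ a, ∃ B, ∀ b q, x ≤ q → E α0 0 0 ≤ q → E o a b ≤ q → ¬ E o (a+1) 0 ≤ q → b ≤ B := by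
    intro a
    obtain ⟨m, hm⟩ : ∃ m, ¬ E o 0 m ≤ x ⊔ E α0 0 0 ⊔ E o (a+1) 0 := by
      by_contra! h
      have : (Set.univ : Set ℕ).Finite := by
        refine Set.Finite.subset (Set.Finite.preimage (f := fun m => E o 0 m) ?_
          (hfin (x ⊔ E α0 0 0 ⊔ E o (a+1) 0))) (fun m _ => h m)
        intro a _ b _ hab
        exact (hEinj _ _ _ _ _ _ hab).2.2
      exact Set.infinite_univ this
    refine ⟨m, fun b q hxq hαq hab hna => ?_⟩
    by_contra! hb
    have hwq : E o 0 m ≤ q := (hmono o 0 m a b (Nat.zero_le _) hb.le).trans hab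
    refine aux_breadth hQ ![x, E α0 0 0, E o (a+1) 0, E o 0 m]
      ![E α0 0 0 ⊔ E o (a+1) m, x ⊔ E o (a+1) m, q, x ⊔ E α0 0 0 ⊔ E o (a+1) 0] ?_ ?_
    · have e1 : E o (a+1) 0 ≤ E o (a+1) m := hmono _ _ _ _ _ le_rfl (Nat.zero_le _)
      have e2 : E o 0 m ≤ E o (a+1) m := hmono _ _ _ _ _ (Nat.zero_le _) le_rfl
      have l0 : E α0 0 0 ≤ E α0 0 0 ⊔ E o (a+1) m := le_sup_left
      have l1 := e1.trans (le_sup_right : _ ≤ E α0 0 0 ⊔ E o (a+1) m)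
      have l2 := e2.trans (le_sup_right : _ ≤ E α0 0 0 ⊔ E o (a+1) m)
      have l3 : x ≤ x ⊔ E o (a+1) m := le_sup_left
      have l4 := e1.trans (le_sup_right : _ ≤ x ⊔ E o (a+1) m)
      have l5 := e2.trans (le_sup_right : _ ≤ x ⊔ E o (a+1) m)
      have l6 : x ≤ x ⊔ E α0 0 0 ⊔ E o (a+1) 0 := le_sup_left.trans le_sup_left
      have l7 : E α0 0 0 ≤ x ⊔ E α0 0 0 ⊔ E o (a+1) 0 := le_sup_right.trans le_sup_left
      have l8 : E o (a+1) 0 ≤ x ⊔ E α0 0 0 ⊔ E o (a+1) 0 := le_sup_right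
      intro i j hij
      fin_cases i <;> fin_cases j <;> first | exact absurd rfl hij | assumption
    · intro i
      fin_cases i
      · intro h
        exact hx (I.lower h (Order.Ideal.sup_mem (hEI _ _ _) (hEI _ _ _)))
      · exact hα0 (a+1) m
      · exact hna
      · exact hm
  choose F hF using hF
  obtain ⟨g, ⟨α, hα, rfl⟩, hg⟩ := hdom (fun n => max (max (F n) n) (ρ o α0 n))
  obtain ⟨N, hN⟩ := Filter.eventually_atTop.1 hg
  rcases lt_trichotomy α α0 with hlt | heq | hgt
  · have h1 := hN (max N (ρ α α0 0)) (le_max_left _ _)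
    set n := max N (ρ α α0 0) with hn
    have := hjoin o α (h0 α) n 0 0 0 (some (α0, n, max (ρ o α0 n) (ρ α α0 0)))
      (by simp [KRel, h0]) (by simp [KRel, hlt.le])
    simp only [KRel] at this
    have h2 := this.2.2.1
    have h3 : ρ α α0 0 ≤ n := le_max_right _ _
    simp only [max_lt_iff] at h1
    omega
  · have := hN N le_rfl
    rw [heq] at this
    simp at this
  · set N' := max N (ρ α0 α 0) with hN'
    set q := x ⊔ E α 0 0 ⊔ E o N' 0 with hq
    have hfn : {n | E o n 0 ≤ q}.Finite := by
      refine Set.Finite.preimage (f := fun n => E o n 0) ?_ (hfin q)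
      intro a _ b _ hab
      exact (hEinj _ _ _ _ _ _ hab).2.1
    obtain ⟨n, hn1, hn2⟩ := hfn.exists_le_maximal (show N' ∈ {n | E o n 0 ≤ q} from le_sup_right)
    have hnq : E o n 0 ≤ q := hn2.prop
    have hn3 : ¬ E o (n+1) 0 ≤ q := fun h => by
      have := hn2.le_of_ge h (Nat.le_succ n)
      omega
    have hNn : N ≤ n := (le_max_left _ _).trans hn1
    have hRn : ρ α0 α 0 ≤ n := (le_max_right _ _).trans hn1
    have h1 := hN n hNn
    simp only [max_lt_iff] at h1
    have h2 : E α n (ρ o α n) ≤ q := by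
      have := hEj o α n 0 0 0 q (h0 α) hnq (le_sup_right.trans le_sup_left)
      simpa using this
    have h3 : E o n (ρ o α n) ≤ q := by
      refine le_trans ?_ h2
      rw [hE]; simp [KRel, h0]
    have h4 : E α0 0 0 ≤ q := by
      refine le_trans ?_ h2
      rw [hE]; simp [KRel, hgt.le]; omega
    have := hF n (ρ o α n) q (le_sup_left.trans le_sup_left) h4 h3 hn3
    omega

theorem aux_extend {X : Type 1} (r : X → X → Prop) (hr : RelIsNLadder r 3) (C : Set X)
    (hne : C.Nonempty)
    (hcof : ∀ x, ∃ c ∈ C, r x c)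
    (hmeet : ∀ c ∈ C, ∀ d ∈ C, ∀ z, r z c → r z d → (∀ w, r w c → r w d → r w z) → z ∈ C)
    (hcov : ∀ c ∈ C, ∃ S T : Set X, S.Subsingleton ∧ T.Subsingleton ∧
      ∀ d ∈ C, r d c → d ≠ c → (∀ y ∈ C, r d y → r y c → y = d ∨ y = c) → d ∈ S ∨ d ∈ T) :
    ¬ RelIsMaximalNLadder r 3 := by
  rintro ⟨-, hmax⟩
  apply hmax
  obtain ⟨hp, hsup, hinf, hfin, hcv⟩ := hr
  have hrefl : ∀ a, r a a := fun a => hp.refl a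
  have htr : ∀ a b c, r a b → r b c → r a c := fun a b c => hp.trans a b c
  have has : ∀ a b, r a b → r b a → a = b := fun a b => hp.antisymm a b
  let Q : Type 1 := {p : X × Bool // p.2 = true → p.1 ∈ C}
  let po : PartialOrder Q :=
    { le := fun p q => r p.1.1 q.1.1 ∧ p.1.2 ≤ q.1.2
      le_refl := fun p => ⟨hrefl _, le_rfl⟩
      le_trans := fun p q s h1 h2 => ⟨htr _ _ _ h1.1 h2.1, h1.2.trans h2.2⟩
      le_antisymm := fun p q h1 h2 =>
        Subtype.ext (Prod.ext (has _ _ h1.1 h2.1) (le_antisymm h1.2 h2.2)) }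
  have hle : ∀ p q : Q, p ≤ q ↔ r p.1.1 q.1.1 ∧ p.1.2 ≤ q.1.2 := fun p q => Iff.rfl
  have hglb : ∀ p q : Q, ∃ z, z ≤ p ∧ z ≤ q ∧ ∀ w, w ≤ p → w ≤ q → w ≤ z := by
    intro p q
    obtain ⟨z, h1, h2, h3⟩ := hinf p.1.1 q.1.1
    refine ⟨⟨(z, p.1.2 ⊓ q.1.2), ?_⟩, ⟨h1, inf_le_left⟩, ⟨h2, inf_le_right⟩, ?_⟩
    · intro h
      have h' : p.1.2 = true ∧ q.1.2 = true := by simpa using h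
      exact hmeet _ (p.2 h'.1) _ (q.2 h'.2) z h1 h2 h3
    · intro w hw1 hw2
      exact ⟨h3 _ hw1.1 hw2.1, le_inf hw1.2 hw2.2⟩
  have hQfin : ∀ p : Q, (Set.Iic p).Finite := by
    intro p
    have h1 : ({y | r y p.1.1} ×ˢ (Set.univ : Set Bool)).Finite := (hfin p.1.1).prod Set.finite_univ
    refine Set.Finite.subset (Set.Finite.preimage (f := fun q : Q => q.1) ?_ h1) ?_
    · exact Subtype.val_injective.injOn
    · intro q hq
      exact ⟨hq.1, trivial⟩
  have hlub : ∀ p q : Q, ∃ z, p ≤ z ∧ q ≤ z ∧ ∀ w, p ≤ w → q ≤ w → z ≤ w := by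
    intro p q
    obtain ⟨z0, h1, h2, -⟩ := hsup p.1.1 q.1.1
    obtain ⟨c, hc, hzc⟩ := hcof z0
    let u : Q := ⟨(c, true), fun _ => hc⟩
    have hu : u ∈ {w : Q | w ≤ u ∧ p ≤ w ∧ q ≤ w} :=
      ⟨le_rfl, ⟨htr _ _ _ h1 hzc, Bool.le_true _⟩, ⟨htr _ _ _ h2 hzc, Bool.le_true _⟩⟩
    have hf : {w : Q | w ≤ u ∧ p ≤ w ∧ q ≤ w}.Finite := (hQfin u).subset fun w hw => hw.1
    obtain ⟨z, -, hz⟩ := hf.exists_le_minimal hu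
    refine ⟨z, hz.prop.2.1, hz.prop.2.2, fun w hw1 hw2 => ?_⟩
    obtain ⟨g, hg1, hg2, hg3⟩ := hglb z w
    exact (hz.le_of_le ⟨hg1.trans hz.prop.1, hg3 _ hz.prop.2.1 hw1, hg3 _ hz.prop.2.2 hw2⟩ hg1).trans hg2
  choose si hs1 hs2 hs3 using hlub
  choose ii hi1 hi2 hi3 using hglb
  let L : Lattice Q :=
    { po with
      sup := si
      inf := ii
      le_sup_left := hs1
      le_sup_right := hs2
      sup_le := fun a b c h h' => hs3 a b c h h'
      inf_le_left := hi1
      inf_le_right := hi2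
      le_inf := fun a b c h h' => hi3 b c a h h' }
  obtain ⟨c0, hc0⟩ := hne
  have hIdeal : Order.IsIdeal {q : Q | q.1.2 = false} := by
    refine ⟨?_, ⟨⟨(c0, false), fun h => by simp at h⟩, rfl⟩, ?_⟩
    · intro a b hba ha
      have h2 : b.1.2 ≤ a.1.2 := hba.2
      have ha' : a.1.2 = false := ha
      rw [ha'] at h2
      exact le_bot_iff.1 h2
    · intro a ha b hb
      obtain ⟨z, h1, h2, -⟩ := hsup a.1.1 b.1.1
      exact ⟨⟨(z, false), fun h => by simp at h⟩, rfl, ⟨h1, le_of_eq ha⟩, ⟨h2, le_of_eq hb⟩⟩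
  refine ⟨Q, L, hIdeal.toIdeal, ⟨⟨⟨(c0, true), fun _ => hc0⟩⟩, hQfin, ?_⟩, ?_, ?_⟩
  · rintro ⟨⟨c, _ | _⟩, hc⟩
    · refine le_trans ?_ (hcv c)
      have hcf : {z | RelCovBy r z c}.Finite := (hfin c).subset fun z hz => hz.1.1
      let j : X → Q := fun z => ⟨(z, false), fun h => by simp at h⟩
      refine le_trans (Set.ncard_le_ncard (t := j '' {z | RelCovBy r z c}) ?_ (hcf.image j))
        (Set.ncard_image_le hcf)
      rintro ⟨⟨z, b⟩, hz⟩ hzc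
      have hzc1 := hzc.1.le.1
      have hzb : b = false := le_bot_iff.1 hzc.1.le.2
      subst hzb
      refine ⟨z, ⟨⟨hzc1, ?_⟩, ?_⟩, rfl⟩
      · rintro rfl
        exact hzc.1.ne rfl
      · rintro y ⟨⟨hy1, hy2⟩, ⟨hy3, hy4⟩⟩
        refine hzc.2 (c := j y) (lt_of_le_of_ne ⟨hy1, le_rfl⟩ ?_) (lt_of_le_of_ne ⟨hy3, le_rfl⟩ ?_)
        · intro h
          exact hy2 (congrArg (fun q : Q => q.1.1) h)
        · intro h
          exact hy4 (congrArg (fun q : Q => q.1.1) h)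
    · have hcC : c ∈ C := hc rfl
      obtain ⟨S, T, hS, hT, hST⟩ := hcov c hcC
      let A : Set Q := {q | q.1 = (c, false)}
      let S' : Set Q := {q | q.1.1 ∈ S ∧ q.1.2 = true}
      let T' : Set Q := {q | q.1.1 ∈ T ∧ q.1.2 = true}
      have hA : A.Subsingleton := fun a ha b hb => Subtype.ext (ha.trans hb.symm)
      have hS' : S'.Subsingleton := fun a ha b hb =>
        Subtype.ext (Prod.ext (hS ha.1 hb.1) (ha.2.trans hb.2.symm))
      have hT' : T'.Subsingleton := fun a ha b hb =>
        Subtype.ext (Prod.ext (hT ha.1 hb.1) (ha.2.trans hb.2.symm))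
      have h1 : ∀ B : Set Q, B.Subsingleton → B.ncard ≤ 1 := fun B hB => by
        rw [Set.ncard_le_one hB.finite]
        exact fun a ha b hb => hB ha hb
      have hsub : {y : Q | y ⋖ ⟨(c, true), hc⟩} ⊆ A ∪ (S' ∪ T') := by
        rintro ⟨⟨z, b⟩, hz⟩ hzc
        have hzc1 := hzc.1.le.1
        have hlt := hzc.1
        have hno := hzc.2
        cases b
        · left
          by_contra hne
          refine hno (c := ⟨(c, false), fun h => by simp at h⟩)
            (lt_of_le_of_ne ⟨hzc1, le_rfl⟩ ?_) (lt_of_le_of_ne ⟨hrefl c, Bool.false_le _⟩ ?_)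
          · intro h
            exact hne (congrArg (fun q : Q => q.1) h)
          · intro h
            have := congrArg (fun q : Q => q.1.2) h
            simp at this
        · right
          have := hST z (hz rfl) hzc1 (by rintro rfl; exact hlt.ne rfl) (by
            intro y hy h1 h2
            by_contra! hyy
            refine hno (c := ⟨(y, true), fun _ => hy⟩)
              (lt_of_le_of_ne ⟨h1, le_rfl⟩ ?_) (lt_of_le_of_ne ⟨h2, le_rfl⟩ ?_)
            · intro h
              exact hyy.1 (congrArg (fun q : Q => q.1.1) h).symm
            · intro h
              exact hyy.2 (congrArg (fun q : Q => q.1.1) h))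
          exact this.imp (fun h => ⟨h, rfl⟩) (fun h => ⟨h, rfl⟩)
      have hF : (A ∪ (S' ∪ T')).Finite := hA.finite.union (hS'.finite.union hT'.finite)
      have h2 := Set.ncard_le_ncard hsub hF
      have h3 := Set.ncard_union_le A (S' ∪ T')
      have h4 := Set.ncard_union_le S' T'
      have h5 := h1 A hA
      have h6 := h1 S' hS'
      have h7 := h1 T' hT'
      omega
  · constructor
    intro h
    have : (⟨(c0, true), fun _ => hc0⟩ : Q) ∈ ({q : Q | q.1.2 = false} : Set Q) := by
      have h' : ({q : Q | q.1.2 = false} : Set Q) = Set.univ := h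
      rw [h']; trivial
    have h2 : true = false := this
    cases h2
  · refine ⟨⟨fun z => ⟨⟨(z, false), fun h => by simp at h⟩, rfl⟩, fun q => q.1.1.1, fun z => rfl, ?_⟩, ?_⟩
    · rintro ⟨⟨⟨z, b⟩, hz⟩, hb⟩
      have hb' : b = false := hb
      subst hb'
      rfl
    · intro a b
      exact ⟨fun h => ⟨h, le_rfl⟩, fun h => h.1⟩

theorem aux_max_dom (ρ : Omega1 → Omega1 → ℕ → ℕ)
    (hdiag : ∀ α : Omega1, ∀ n : ℕ, ρ α α n = 0)
    (hladder : RelIsNLadder (KRel ρ) 3)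
    (hmax : RelIsMaximalNLadder (KRel ρ) 3) :
    IsDominating {g : ℕ → ℕ | ∃ α : Omega1, omega1Zero < α ∧ g = ρ omega1Zero α} := by
  intro f0
  by_contra! hcon
  have hjoin := aux_join ρ hdiag hladder
  have h0 : ∀ α : Omega1, omega1Zero ≤ α := fun α => Subtype.coe_le_coe.1 (zero_le (a := α.1))
  have htr : ∀ a b c, KRel ρ a b → KRel ρ b c → KRel ρ a c := fun a b c => hladder.1.trans a b c
  set o := omega1Zero with ho
  let f : ℕ → ℕ := fun n => ∑ i ∈ Finset.range (n+1), (f0 i + 1)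
  have hf : StrictMono f := by
    refine strictMono_nat_of_lt_succ fun n => ?_
    change f n < ∑ i ∈ Finset.range (n+1+1), (f0 i + 1)
    rw [Finset.sum_range_succ]
    change f n < f n + _
    omega
  have hff : ∀ n, f0 n ≤ f n := by
    intro n
    have := Finset.single_le_sum (f := fun i => f0 i + 1) (fun i _ => Nat.zero_le _)
      (Finset.self_mem_range_succ n)
    change f0 n ≤ ∑ i ∈ Finset.range (n+1), (f0 i + 1)
    have h2 : f0 n + 1 ≤ ∑ i ∈ Finset.range (n+1), (f0 i + 1) := this
    omega
  have hinf : ∀ α N, ∃ n, N ≤ n ∧ ρ o α n ≤ f n := by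
    intro α N
    rcases (h0 α).eq_or_lt with h | h
    · exact ⟨N, le_rfl, by rw [← h, hdiag]; exact Nat.zero_le _⟩
    · have := hcon _ ⟨α, h, rfl⟩
      obtain ⟨n, hn, hn'⟩ := Filter.frequently_atTop.1 this N
      exact ⟨n, hn, hn'.trans (hff n)⟩
  have hmono : ∀ α n n', n ≤ n' → ρ o α n ≤ ρ o α n' := by
    intro α n n' h
    have := htr (some (o, n, 0)) (some (o, n', 0)) (some (α, n', ρ o α n'))
      (by simp [KRel, h, hdiag]) (by simp [KRel, h0])
    simp only [KRel] at this
    exact this.2.2.2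
  refine aux_extend (KRel ρ) hladder {x | ∃ α n, x = some (α, n, f n) ∧ ρ o α n ≤ f n} ?_ ?_ ?_ ?_ hmax
  · exact ⟨_, o, 0, rfl, by rw [hdiag]; exact Nat.zero_le _⟩
  · rintro (_ | ⟨α, n, m⟩)
    · exact ⟨_, ⟨o, 0, rfl, by rw [hdiag]; exact Nat.zero_le _⟩, trivial⟩
    · obtain ⟨k, hk, hk'⟩ := hinf α (max n m)
      refine ⟨_, ⟨α, k, rfl, hk'⟩, ?_⟩
      have := hf.le_apply (x := k)
      simp only [KRel, hdiag]
      simp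
      omega
  · have key : ∀ α n β n' z, n ≤ n' → ρ o α n ≤ f n → ρ o β n' ≤ f n' →
        KRel ρ z (some (α, n, f n)) → KRel ρ z (some (β, n', f n')) →
        (∀ w, KRel ρ w (some (α, n, f n)) → KRel ρ w (some (β, n', f n')) → KRel ρ w z) →
        ∃ γ k, z = some (γ, k, f k) ∧ ρ o γ k ≤ f k := by
      intro α n β n' z hn h1 h2 hz1 hz2 hz3
      have hfn : f n ≤ f n' := hf.monotone hn
      have := hz3 (some (o, n, f n)) (by simp [KRel, h0, h1])
        (by
          have := (hmono β n n' hn).trans h2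
          simp [KRel, h0, hn, hfn, this])
      match z, hz1, this with
      | some (γ, k, l), hz1, this =>
        simp only [KRel] at hz1 this
        obtain rfl : k = n := le_antisymm hz1.2.1 this.2.1
        obtain rfl : l = f k := le_antisymm hz1.2.2.1 this.2.2.1
        exact ⟨γ, k, rfl, this.2.2.2⟩
    rintro _ ⟨α, n, rfl, h1⟩ _ ⟨β, n', rfl, h2⟩ z hz1 hz2 hz3
    rcases le_total n n' with h | h
    · exact key α n β n' z h h1 h2 hz1 hz2 hz3
    · exact key β n' α n z h h2 h1 hz2 hz1 (fun w h h' => hz3 w h' h)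
  · rintro _ ⟨α, n, rfl, hαn⟩
    let c : KType := some (α, n, f n)
    let C : Set KType := {x | ∃ α n, x = some (α, n, f n) ∧ ρ o α n ≤ f n}
    let P : KType → Prop := fun d => d ∈ C ∧ KRel ρ d c ∧ d ≠ c ∧
      (∀ y ∈ C, KRel ρ d y → KRel ρ y c → y = d ∨ y = c)
    refine ⟨{d | P d ∧ ∃ β, d = some (β, n, f n)}, {d | P d ∧ ∃ k, d = some (α, k, f k)}, ?_, ?_, ?_⟩
    · have key : ∀ β γ, β ≤ γ → P (some (β, n, f n)) → P (some (γ, n, f n)) → β = γ := by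
        rintro β γ hbg ⟨h1, h2, h3, h4⟩ ⟨g1, g2, g3, g4⟩
        have hj := hjoin β γ hbg n (f n) n (f n) c h2 g2
        simp only [KRel, c] at hj
        have hle : ρ β γ n ≤ f n := le_trans (le_max_right _ _) hj.2.2.1
        rcases h4 _ g1 (by simp [KRel, hbg, hle]) g2 with h | h
        · simp at h; exact h.symm
        · exact absurd h g3
      rintro _ ⟨hd, β, rfl⟩ _ ⟨hd', γ, rfl⟩
      rcases le_total β γ with h | h
      · rw [key _ _ h hd hd']
      · rw [key _ _ h hd' hd]
    · have key : ∀ k l, k ≤ l → P (some (α, k, f k)) → P (some (α, l, f l)) → k = l := by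
        rintro k l hkl ⟨h1, h2, h3, h4⟩ ⟨g1, g2, g3, g4⟩
        rcases h4 _ g1 (by simp [KRel, hkl, hf.monotone hkl, hdiag]) g2 with h | h
        · simp at h; exact h.1.symm
        · exact absurd h g3
      rintro _ ⟨hd, k, rfl⟩ _ ⟨hd', l, rfl⟩
      rcases le_total k l with h | h
      · rw [key _ _ h hd hd']
      · rw [key _ _ h hd' hd]
    · rintro _ ⟨β, k, rfl, hβ⟩ h2 h3 h4
      have hP : P (some (β, k, f k)) := ⟨⟨β, k, rfl, hβ⟩, h2, h3, h4⟩
      by_cases hb : β = α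
      · right
        exact ⟨hP, k, by rw [hb]⟩
      · left
        refine ⟨hP, β, ?_⟩
        have h2' := h2
        simp only [KRel] at h2'
        have hj := hjoin o β (h0 β) n (f n) k (f k) c (by simp [KRel, c, h0, hαn]) h2
        have hj' := hj
        simp only [KRel, c] at hj'
        rw [max_eq_left h2'.2.1, max_eq_left h2'.2.2.1] at hj
        have hle : ρ o β n ≤ f n := le_trans (le_max_right _ _) hj'.2.2.1
        rw [max_eq_left hle] at hj
        rcases h4 _ ⟨β, n, rfl, hle⟩ (by simp [KRel, h2'.2.1, h2'.2.2.1, hdiag]) hj with h | h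
        · exact h.symm
        · simp at h; exact absurd h hb

/-- if `(K, ⊴_ρ)` is a 3-ladder, then it is a maximal 3-ladder
iff `{ρ(0,α) : 0 < α < ω₁}` is a dominating family. -/
theorem K_maximal_iff_dominating (ρ : Omega1 → Omega1 → ℕ → ℕ)
    (hdiag : ∀ α : Omega1, ∀ n : ℕ, ρ α α n = 0)
    (hladder : RelIsNLadder (KRel ρ) 3) :
    RelIsMaximalNLadder (KRel ρ) 3 ↔
      IsDominating {g : ℕ → ℕ | ∃ α : Omega1, omega1Zero < α ∧ g = ρ omega1Zero α} := by
  exact ⟨aux_max_dom ρ hdiag hladder, aux_dom_max ρ hdiag hladder⟩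
end

section
/- If 𝔡 = ℵ1, i.e., there exists a dominating family of functions ω → ω of cardinality ℵ1, then there exists a map ρ as above such that (K, ⊴_ρ) is a maximal 3-ladder. -/
structure GoodRho (ρ : Omega1 → Omega1 → ℕ → ℕ) : Prop where
  zero : ∀ α n, ρ α α n = 0
  mono : ∀ α β n n', n ≤ n' → ρ α β n ≤ ρ α β n'
  sub1 : ∀ α β γ n, α ≤ β → β ≤ γ → ρ α γ n ≤ max (ρ α β n) (ρ β γ n)
  sub2 : ∀ α β γ n, α ≤ β → β ≤ γ → ρ α β n ≤ max (ρ α γ n) (ρ β γ 0)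
  sub3 : ∀ α β γ n, α ≤ β → β ≤ γ → ρ β γ n ≤ max (ρ α γ n) (ρ β γ 0)
  fin : ∀ β m, {α | α ≤ β ∧ ρ α β 0 ≤ m}.Finite

/-- join in K -/
def IsJ {X : Type*} (r : X → X → Prop) (x y z : X) : Prop :=
  r x z ∧ r y z ∧ ∀ w, r x w → r y w → r z w

theorem IsJ.symm {X : Type*} {r : X → X → Prop} {x y z : X} (h : IsJ r x y z) : IsJ r y x z :=
  ⟨h.2.1, h.1, fun w a b => h.2.2 w b a⟩

theorem KRel_some {ρ α n m β n' m'} : KRel ρ (some (α,n,m)) (some (β,n',m')) ↔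
    α ≤ β ∧ n ≤ n' ∧ m ≤ m' ∧ ρ α β n ≤ m' := Iff.rfl

theorem GoodRho.po {ρ} (h : GoodRho ρ) : IsPartialOrder KType (KRel ρ) where
  refl := by
    rintro (_ | ⟨α, n, m⟩)
    · trivial
    · simp [KRel, h.zero]
  trans := by
    rintro (_ | ⟨α, n, m⟩) (_ | ⟨β, n', m'⟩) (_ | ⟨γ, k, l⟩) h1 h2
    all_goals try trivial
    rw [KRel_some] at *
    obtain ⟨a1, a2, a3, a4⟩ := h1
    obtain ⟨b1, b2, b3, b4⟩ := h2
    refine ⟨a1.trans b1, a2.trans b2, a3.trans b3, ?_⟩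
    have := h.sub1 α β γ n a1 b1
    have := h.mono β γ n n' a2
    omega
  antisymm := by
    rintro (_ | ⟨α, n, m⟩) (_ | ⟨β, n', m'⟩) h1 h2
    all_goals try trivial
    rw [KRel_some] at *
    obtain ⟨a1, a2, a3, a4⟩ := h1
    obtain ⟨b1, b2, b3, b4⟩ := h2
    rw [le_antisymm a1 b1, le_antisymm a2 b2, le_antisymm a3 b3]

theorem GoodRho.isJ {ρ} (h : GoodRho ρ) {α β : Omega1} (hab : α ≤ β) (n m n' m' : ℕ) :
    IsJ (KRel ρ) (some (α,n,m)) (some (β,n',m'))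
      (some (β, max n n', max (max m m') (ρ α β n))) := by
  refine ⟨?_, ?_, ?_⟩
  · rw [KRel_some]; refine ⟨hab, ?_, ?_, ?_⟩ <;> omega
  · rw [KRel_some, h.zero]; refine ⟨le_rfl, ?_, ?_, ?_⟩ <;> omega
  · rintro (_ | ⟨γ, k, l⟩) h1 h2
    · exact h1
    rw [KRel_some] at *
    obtain ⟨a1, a2, a3, a4⟩ := h1
    obtain ⟨b1, b2, b3, b4⟩ := h2
    have e1 := h.sub2 α β γ n hab b1
    have e2 := h.sub3 α β γ n hab b1
    have e3 := h.mono β γ 0 n' (Nat.zero_le _)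
    refine ⟨b1, ?_, ?_, ?_⟩
    · omega
    · omega
    · rcases le_total n n' with c | c
      · rw [max_eq_right c]; exact b4
      · rw [max_eq_left c]; omega

theorem GoodRho.exJ {ρ} (h : GoodRho ρ) (x y : KType) : ∃ z, IsJ (KRel ρ) x y z := by
  have := h.po
  rcases x with _ | ⟨α, n, m⟩
  · exact ⟨y, trivial, this.refl _, fun w _ h => h⟩
  rcases y with _ | ⟨β, n', m'⟩
  · exact ⟨_, this.refl _, trivial, fun w h _ => h⟩
  rcases le_total α β with c | c
  · exact ⟨_, h.isJ c n m n' m'⟩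
  · exact ⟨_, (h.isJ c n' m' n m).symm⟩

theorem GoodRho.lf {ρ} (h : GoodRho ρ) (x : KType) : {y | KRel ρ y x}.Finite := by
  rcases x with _ | ⟨γ, n, m⟩
  · apply (Set.finite_singleton none).subset
    rintro (_ | _) hy
    · rfl
    · exact hy.elim
  · have : (insert none (some '' ({α | α ≤ γ ∧ ρ α γ 0 ≤ m} ×ˢ (Set.Iic n ×ˢ Set.Iic m)))
        : Set KType).Finite :=
      (((h.fin γ m).prod ((Set.finite_Iic n).prod (Set.finite_Iic m))).image _).insert _
    apply this.subset
    rintro (_ | ⟨α, k, l⟩) hy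
    · simp
    · right
      obtain ⟨a1, a2, a3, a4⟩ := hy
      have := h.mono α γ 0 k (Nat.zero_le _)
      exact ⟨(α, k, l), ⟨⟨a1, this.trans a4⟩, Set.mem_Iic.2 a2, Set.mem_Iic.2 a3⟩, rfl⟩

theorem GoodRho.exM {ρ} (h : GoodRho ρ) (x y : KType) :
    ∃ z, KRel ρ z x ∧ KRel ρ z y ∧ ∀ w, KRel ρ w x → KRel ρ w y → KRel ρ w z := by
  have po := h.po
  have hf : {w | KRel ρ w x ∧ KRel ρ w y}.Finite := (h.lf x).subset (fun w hw => hw.1)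
  have key : ∀ S : Set KType, S.Finite → (∀ w ∈ S, KRel ρ w x ∧ KRel ρ w y) →
      ∃ z, KRel ρ z x ∧ KRel ρ z y ∧ ∀ w ∈ S, KRel ρ w z := by
    intro S hS
    induction S, hS using Set.Finite.induction_on with
    | empty => exact fun _ => ⟨none, trivial, trivial, by simp⟩
    | @insert a S _ _ ih =>
      intro hw
      obtain ⟨z, z1, z2, z3⟩ := ih (fun w hh => hw w (Set.mem_insert_of_mem _ hh))
      obtain ⟨j, j1, j2, j3⟩ := h.exJ a z
      have ha := hw a (Set.mem_insert _ _)
      refine ⟨j, j3 _ ha.1 z1, j3 _ ha.2 z2, ?_⟩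
      rintro w (rfl | hh)
      · exact j1
      · exact po.trans _ _ _ (z3 w hh) j2
  obtain ⟨z, z1, z2, z3⟩ := key _ hf (fun w hw => hw)
  exact ⟨z, z1, z2, fun w a b => z3 w ⟨a, b⟩⟩

theorem GoodRho.cov {ρ} (h : GoodRho ρ) (x : KType) : {z | RelCovBy (KRel ρ) z x}.ncard ≤ 3 := by
  classical
  suffices ∃ A B C : KType, {z | RelCovBy (KRel ρ) z x} ⊆ {A, B, C} by
    obtain ⟨A, B, C, hs⟩ := this
    refine (Set.ncard_le_ncard hs (by simp)).trans ?_
    refine (Set.ncard_insert_le _ _).trans ?_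
    have := Set.ncard_insert_le B {C}
    rw [Set.ncard_singleton] at this
    omega
  have cov : ∀ z A, RelCovBy (KRel ρ) z x → KRel ρ z A → RelLt (KRel ρ) A x → z = A := by
    intro z A hz h1 h2
    by_contra hne
    exact hz.2 A ⟨⟨h1, hne⟩, h2⟩
  rcases x with _ | ⟨γ, n, m⟩
  · refine ⟨none, none, none, ?_⟩
    rintro (_ | z) hz
    · simp
    · exact hz.1.1.elim
  have hA : ∃ A, ((A = none ∧ n = 0) ∨ (0 < n ∧ A = some (γ, n-1, m))) := by
    rcases Nat.eq_zero_or_pos n with c | c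
    · exact ⟨_, Or.inl ⟨rfl, c⟩⟩
    · exact ⟨_, Or.inr ⟨c, rfl⟩⟩
  have hB : ∃ A, ((A = none ∧ m = 0) ∨ (0 < m ∧ A = some (γ, n, m-1))) := by
    rcases Nat.eq_zero_or_pos m with c | c
    · exact ⟨_, Or.inl ⟨rfl, c⟩⟩
    · exact ⟨_, Or.inr ⟨c, rfl⟩⟩
  have hC : ∃ A, ((A = none ∧ ∀ α < γ, ¬ ρ α γ n ≤ m) ∨
      ∃ α₀ < γ, ρ α₀ γ n ≤ m ∧ (∀ α < γ, ρ α γ n ≤ m → α ≤ α₀) ∧ A = some (α₀, n, m)) := by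
    by_cases c : ∃ α < γ, ρ α γ n ≤ m
    · have hf : {α | α < γ ∧ ρ α γ n ≤ m}.Finite := by
        refine (h.fin γ m).subset ?_
        rintro α ⟨a1, a2⟩
        exact ⟨a1.le, (h.mono α γ 0 n (Nat.zero_le _)).trans a2⟩
      obtain ⟨a, a1, a2⟩ := c
      obtain ⟨α₀, h1, h2⟩ := Set.exists_max_image _ id hf ⟨a, a1, a2⟩
      exact ⟨_, Or.inr ⟨α₀, h1.1, h1.2, fun α b1 b2 => h2 α ⟨b1, b2⟩, rfl⟩⟩
    · push Not at c
      exact ⟨none, Or.inl ⟨rfl, fun α ha => not_le.2 (c α ha)⟩⟩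
  obtain ⟨A, hA⟩ := hA
  obtain ⟨B, hB⟩ := hB
  obtain ⟨C, hC⟩ := hC
  have lA : RelLt (KRel ρ) A (some (γ, n, m)) := by
    rcases hA with ⟨rfl, _⟩ | ⟨c, rfl⟩
    · exact ⟨trivial, by simp⟩
    · refine ⟨?_, by simp; omega⟩
      rw [KRel_some, h.zero]; refine ⟨le_rfl, ?_, ?_, ?_⟩ <;> omega
  have lB : RelLt (KRel ρ) B (some (γ, n, m)) := by
    rcases hB with ⟨rfl, _⟩ | ⟨c, rfl⟩
    · exact ⟨trivial, by simp⟩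
    · refine ⟨?_, by simp; omega⟩
      rw [KRel_some, h.zero]; refine ⟨le_rfl, ?_, ?_, ?_⟩ <;> omega
  have lC : RelLt (KRel ρ) C (some (γ, n, m)) := by
    rcases hC with ⟨rfl, _⟩ | ⟨α, c, c2, _, rfl⟩
    · exact ⟨trivial, by simp⟩
    · refine ⟨?_, by simp [c.ne]⟩
      rw [KRel_some]; exact ⟨c.le, le_rfl, le_rfl, c2⟩
  refine ⟨A, B, C, ?_⟩
  rintro (_ | ⟨α, k, l⟩) hz
  · left; exact cov _ _ hz trivial lA
  obtain ⟨a1, a2, a3, a4⟩ := KRel_some.1 hz.1.1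
  rcases a2.lt_or_eq with c | rfl
  · left
    rcases hA with ⟨_, _⟩ | ⟨c', rfl⟩
    · omega
    refine cov _ _ hz ?_ lA
    rw [KRel_some]; refine ⟨a1, ?_, a3, a4⟩; omega
  rcases a1.lt_or_eq with c | rfl
  · right; right
    rcases hC with ⟨_, c'⟩ | ⟨α₀, c', c2, c3, rfl⟩
    · exact absurd a4 (c' _ c)
    refine cov _ _ hz ?_ lC
    have e := c3 _ c a4
    rw [KRel_some]; refine ⟨e, le_rfl, a3, ?_⟩
    have := h.sub2 α α₀ γ k e c'.le
    have := h.mono α₀ γ 0 k (Nat.zero_le _)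
    omega
  · right; left
    rcases a3.lt_or_eq with c | rfl
    · rcases hB with ⟨_, _⟩ | ⟨c', rfl⟩
      · omega
      refine cov _ _ hz ?_ lB
      rw [KRel_some, h.zero]; refine ⟨le_rfl, le_rfl, ?_, ?_⟩ <;> omega
    · exact absurd rfl hz.1.2

theorem GoodRho.ladder {ρ} (h : GoodRho ρ) : RelIsNLadder (KRel ρ) 3 :=
  ⟨h.po, h.exJ, h.exM, h.lf, h.cov⟩

theorem exists_cov {Q : Type*} [Lattice Q] (hf : ∀ x : Q, (Set.Iic x).Finite) {a y : Q}
    (h : a < y) : ∃ c, a ≤ c ∧ c ⋖ y := by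
  have hfin : (Set.Iio y).Finite := (hf y).subset Set.Iio_subset_Iic_self
  obtain ⟨c, hc, hm⟩ := hfin.exists_le_maximal (show a ∈ Set.Iio y from h)
  refine ⟨c, hc, hm.prop, ?_⟩
  intro d hd hdy
  exact absurd (hm.le_of_ge hdy hd.le) (not_le_of_gt hd)

theorem breadth {Q : Type*} [Lattice Q] (hQ : IsNLadder Q 3) (a b c q : Q) :
    a ≤ q ⊔ (b ⊔ c) ∨ b ≤ q ⊔ (a ⊔ c) ∨ c ≤ q ⊔ (a ⊔ b) ∨ q ≤ a ⊔ b ⊔ c := by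
  classical
  by_contra hcon
  push Not at hcon
  obtain ⟨h1, h2, h3, h4⟩ := hcon
  obtain ⟨_, hf, hc⟩ := hQ
  set y := a ⊔ b ⊔ c ⊔ q with hy
  have ya : a ≤ y := by rw [hy]; exact le_sup_of_le_left (le_sup_of_le_left le_sup_left)
  have yb : b ≤ y := by rw [hy]; exact le_sup_of_le_left (le_sup_of_le_left le_sup_right)
  have yc : c ≤ y := by rw [hy]; exact le_sup_of_le_left le_sup_right
  have yq : q ≤ y := by rw [hy]; exact le_sup_right
  have lub : ∀ z, a ≤ z → b ≤ z → c ≤ z → q ≤ z → y ≤ z := fun z k1 k2 k3 k4 =>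
    sup_le (sup_le (sup_le k1 k2) k3) k4
  obtain ⟨c1, d1, e1⟩ := exists_cov hf (a := q ⊔ (b ⊔ c)) (y := y)
    (lt_of_le_of_ne (sup_le yq (sup_le yb yc)) (fun h => h1 (h ▸ ya)))
  obtain ⟨c2, d2, e2⟩ := exists_cov hf (a := q ⊔ (a ⊔ c)) (y := y)
    (lt_of_le_of_ne (sup_le yq (sup_le ya yc)) (fun h => h2 (h ▸ yb)))
  obtain ⟨c3, d3, e3⟩ := exists_cov hf (a := q ⊔ (a ⊔ b)) (y := y)
    (lt_of_le_of_ne (sup_le yq (sup_le ya yb)) (fun h => h3 (h ▸ yc)))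
  obtain ⟨c4, d4, e4⟩ := exists_cov hf (a := a ⊔ b ⊔ c) (y := y)
    (lt_of_le_of_ne (sup_le (sup_le ya yb) yc) (fun h => h4 (h ▸ yq)))
  simp only [sup_le_iff] at d1 d2 d3 d4
  have ne : ∀ z, z ⋖ y → a ≤ z → b ≤ z → c ≤ z → q ≤ z → False := fun z hz k1 k2 k3 k4 =>
    absurd (lub z k1 k2 k3 k4) (not_le_of_gt hz.lt)
  have n12 : c1 ≠ c2 := by rintro rfl; apply ne c1 <;> tauto
  have n13 : c1 ≠ c3 := by rintro rfl; apply ne c1 <;> tauto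
  have n14 : c1 ≠ c4 := by rintro rfl; apply ne c1 <;> tauto
  have n23 : c2 ≠ c3 := by rintro rfl; apply ne c2 <;> tauto
  have n24 : c2 ≠ c4 := by rintro rfl; apply ne c2 <;> tauto
  have n34 : c3 ≠ c4 := by rintro rfl; apply ne c3 <;> tauto
  have hs : ((({c1, c2, c3, c4} : Finset Q) : Set Q)) ⊆ {z | z ⋖ y} := by
    intro z hz
    simp only [Finset.coe_insert, Finset.coe_singleton, Set.mem_insert_iff,
      Set.mem_singleton_iff] at hz
    rcases hz with rfl | rfl | rfl | rfl <;> assumption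
  have hcard : ({c1, c2, c3, c4} : Finset Q).card = 4 := by
    rw [Finset.card_insert_of_notMem, Finset.card_insert_of_notMem, Finset.card_insert_of_notMem,
      Finset.card_singleton] <;> simp [*]
  have := Set.ncard_le_ncard hs ((hf y).subset (fun z hz => hz.le))
  rw [Set.ncard_coe_finset, hcard] at this
  have := hc y
  omega

theorem countable_Iic_Omega1 (β : Omega1) : (Set.Iic β).Countable := by
  have h1 : (Set.Iio (Order.succ β.1)).Countable := by
    rw [← Set.countable_coe_iff, ← Cardinal.mk_le_aleph0_iff, Cardinal.mk_Iio_ordinal,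
      Cardinal.lift_le_aleph0]
    have : β.1.card < Cardinal.aleph 1 := Cardinal.lt_ord.1 β.2
    have this := Order.lt_succ_iff.1 (this.trans_eq Cardinal.succ_aleph0.symm)
    rw [← Ordinal.add_one_eq_succ, Ordinal.card_add]
    simpa using this
  have : Set.Iic β ⊆ (Subtype.val : Omega1 → Ordinal) ⁻¹' (Set.Iio (Order.succ β.1)) := by
    intro x hx
    exact Order.lt_succ_iff.2 (show x.1 ≤ β.1 from hx)
  exact (h1.preimage Subtype.val_injective).mono this

theorem mk_Omega1 : Cardinal.mk Omega1 = Cardinal.lift.{1, 0} (Cardinal.aleph 1) := by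
  have := Cardinal.mk_Iio_ordinal (Cardinal.aleph.{0} 1).ord
  rw [Cardinal.card_ord] at this
  exact this

theorem bound_Omega1 (S : Set Omega1) (hS : S.Countable) : ∃ δ, ∀ s ∈ S, s < δ := by
  by_contra hcon
  push Not at hcon
  have : (Set.univ : Set Omega1) ⊆ ⋃ s ∈ S, Set.Iic s := by
    intro x _
    obtain ⟨s, hs, hx⟩ := hcon x
    exact Set.mem_biUnion hs hx
  have hc : (Set.univ : Set Omega1).Countable :=
    (hS.biUnion (fun s _ => countable_Iic_Omega1 s)).mono this
  rw [Set.countable_univ_iff, ← Cardinal.mk_le_aleph0_iff, mk_Omega1, Cardinal.lift_le_aleph0] at hc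
  have := Cardinal.aleph0_lt_aleph_one
  exact absurd hc (not_le_of_gt this)

theorem core {ρ} (h : GoodRho ρ)
    (hdom : ∀ (α δ : Omega1) (f : ℕ → ℕ), ∃ γ, δ < γ ∧ ∃ N, ∀ n ≥ N, f n ≤ ρ α γ n)
    (T : KType → KType → Prop)
    (Tr : ∀ a x, KRel ρ a x → T a x)
    (Tt : ∀ a b x, T a b → T b x → T a x)
    (Tj : ∀ a b z x, IsJ (KRel ρ) a b z → T a x → T b x → T z x)
    (Tf : ∀ x, {a | T a x}.Finite)
    (T3 : ∀ a b c ab bc ac, IsJ (KRel ρ) a b ab → IsJ (KRel ρ) b c bc → IsJ (KRel ρ) a c ac →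
      T a bc ∨ T b ac ∨ T c ab) : False := by
  have finA : ∀ (α : Omega1) x, {n : ℕ | T (some (α, n, 0)) x}.Finite := fun α x =>
    (Tf x).preimage (f := fun n : ℕ => (some (α, n, 0) : KType)) (by intro a _ b _ hab; simpa using hab)
  have finB : ∀ (α : Omega1) x, {n : ℕ | T (some (α, 0, n)) x}.Finite := fun α x =>
    (Tf x).preimage (f := fun n : ℕ => (some (α, 0, n) : KType)) (by intro a _ b _ hab; simpa using hab)
  have finC : ∀ x, {γ : Omega1 | T (some (γ, 0, 0)) x}.Finite := fun x =>
    (Tf x).preimage (f := fun γ : Omega1 => (some (γ, 0, 0) : KType))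
      (by intro a _ b _ hab; simpa using hab)
  have J2 : ∀ α γ : Omega1, α ≤ γ → ∀ n, IsJ (KRel ρ) (some (α, n, 0)) (some (γ, 0, 0))
      (some (γ, n, ρ α γ n)) := by
    intro α γ hag n
    have := h.isJ hag n 0 0 0
    simpa using this
  have stepA : ∀ α γ : Omega1, α < γ → (∀ n m, ¬ T (some (γ, 0, 0)) (some (α, n, m))) →
      ∀ n, ∃ m, T (some (α, n, 0)) (some (γ, 0, m)) := by
    intro α γ hag hno n
    obtain ⟨m, hm⟩ := ((finB α (some (γ, n, ρ α γ n))).union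
      (Set.finite_Iio (ρ α γ 0))).exists_notMem
    simp only [Set.mem_union, Set.mem_ofPred_eq, Set.mem_Iio, not_or, not_lt] at hm
    refine ⟨m, ?_⟩
    have j1 : IsJ (KRel ρ) (some (α, n, 0)) (some (α, 0, m)) (some (α, n, m)) := by
      simpa [h.zero] using h.isJ (le_refl α) n 0 0 m
    have j2 : IsJ (KRel ρ) (some (α, 0, m)) (some (γ, 0, 0)) (some (γ, 0, m)) := by
      simpa [hm.2] using h.isJ hag.le 0 m 0 0
    rcases T3 _ _ _ _ _ _ j1 j2 (J2 α γ hag.le n) with k | k | k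
    · exact k
    · exact absurd k hm.1
    · exact absurd k (hno n m)
  have stepB : ∀ α γ : Omega1, α < γ → ∀ n m, T (some (α, n, 0)) (some (γ, 0, m)) →
      T (some (γ, n, ρ α γ n)) (some (γ, 0, m)) := by
    intro α γ hag n m ht
    refine Tj _ _ _ _ (J2 α γ hag.le n) ht (Tr _ _ ?_)
    rw [KRel_some, h.zero]; exact ⟨le_rfl, le_rfl, Nat.zero_le _, Nat.zero_le _⟩
  have bd : ∀ α : Omega1, ∃ δ, α < δ ∧ ∀ γ ≥ δ, ∀ n m, ¬ T (some (γ, 0, 0)) (some (α, n, m)) := by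
    intro α
    have hc : (insert α (⋃ n : ℕ, ⋃ m : ℕ, {γ : Omega1 | T (some (γ, 0, 0)) (some (α, n, m))})).Countable :=
      (Set.countable_iUnion fun n => Set.countable_iUnion fun m => (finC _).countable).insert _
    obtain ⟨δ, hδ⟩ := bound_Omega1 _ hc
    refine ⟨δ, hδ _ (Set.mem_insert _ _), fun γ hγ n m ht => ?_⟩
    refine absurd (hδ γ (Set.mem_insert_of_mem _ ?_)) (not_lt_of_ge hγ)
    exact Set.mem_iUnion.2 ⟨n, Set.mem_iUnion.2 ⟨m, ht⟩⟩
  obtain ⟨α, hα, hα'⟩ := bd omega1Zero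
  have hc : ∀ n, ∃ m, T (some (α, n, 0)) (some (α, 0, m)) := by
    intro n
    obtain ⟨m, hm⟩ := stepA _ α hα (hα' α le_rfl) n
    refine ⟨m, Tt _ _ _ (Tr _ _ ?_) (stepB _ _ hα n m hm)⟩
    rw [KRel_some, h.zero]; exact ⟨le_rfl, le_rfl, Nat.zero_le _, Nat.zero_le _⟩
  choose d hd using hc
  obtain ⟨δ, hδ, hδ'⟩ := bd α
  obtain ⟨γ, hγ, N, hN⟩ := hdom α δ (fun n => d (n+1))
  have hag := hδ.trans hγ
  obtain ⟨m, hm⟩ := stepA α γ hag (hδ' γ hγ.le) N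
  obtain ⟨n, hn, hmax⟩ := Set.exists_max_image _ id (finA α (some (γ, 0, m))) ⟨N, hm⟩
  have hNn : N ≤ n := hmax N hm
  have t1 := stepB α γ hag n m hn
  have t2 : T (some (α, 0, d (n+1))) (some (γ, n, ρ α γ n)) := by
    apply Tr
    rw [KRel_some]
    exact ⟨hag.le, Nat.zero_le _, hN n hNn, h.mono _ _ _ _ (Nat.zero_le _)⟩
  have := hmax (n+1) (Tt _ _ _ (hd (n+1)) (Tt _ _ _ t2 t1))
  simp at this

theorem maximal_of {ρ} (h : GoodRho ρ)
    (hdom : ∀ (α δ : Omega1) (f : ℕ → ℕ), ∃ γ, δ < γ ∧ ∃ N, ∀ n ≥ N, f n ≤ ρ α γ n) :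
    RelIsMaximalNLadder (KRel ρ) 3 := by
  refine ⟨h.ladder, ?_⟩
  rintro ⟨Q, _, I, hQ, hI, e, he⟩
  obtain ⟨q, hq⟩ : ∃ q, q ∉ I := by
    by_contra hcon
    push Not at hcon
    exact hI.ne_univ (Set.eq_univ_of_forall hcon)
  have ej : ∀ a b z, IsJ (KRel ρ) a b z → (e z : Q) = (e a : Q) ⊔ (e b : Q) := by
    intro a b z hz
    have hmem : (e a : Q) ⊔ (e b : Q) ∈ I := Order.Ideal.sup_mem (e a).2 (e b).2
    obtain ⟨w, hw⟩ := e.surjective ⟨_, hmem⟩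
    apply le_antisymm
    · have : KRel ρ z w := hz.2.2 w ((he _ _).2 (by rw [hw]; exact le_sup_left (a := (e a : Q))))
        ((he _ _).2 (by rw [hw]; exact le_sup_right (b := (e b : Q))))
      have := (he _ _).1 this
      rw [hw] at this
      exact this
    · exact sup_le ((he _ _).1 hz.1) ((he _ _).1 hz.2.1)
  refine core h hdom (fun a x => (e a : Q) ≤ q ⊔ e x) ?_ ?_ ?_ ?_ ?_
  · intro a x hax
    exact le_sup_of_le_right ((he _ _).1 hax)
  · intro a b x h1 h2
    exact h1.trans (sup_le le_sup_left h2)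
  · intro a b z x hz h1 h2
    rw [ej _ _ _ hz]
    exact sup_le h1 h2
  · intro x
    exact (hQ.2.1 (q ⊔ e x)).preimage (f := fun a : KType => (e a : Q))
      (by intro a _ b _ hab; exact e.injective (Subtype.ext hab))
  · intro a b c ab bc ac h1 h2 h3
    rw [ej _ _ _ h1, ej _ _ _ h2, ej _ _ _ h3]
    rcases breadth hQ (e a : Q) (e b) (e c) q with k | k | k | k
    · exact Or.inl k
    · exact Or.inr (Or.inl k)
    · exact Or.inr (Or.inr k)
    · exact absurd (I.lower k (Order.Ideal.sup_mem (Order.Ideal.sup_mem (e a).2 (e b).2) (e c).2)) hq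

theorem exists_s : ∃ s : Omega1 → ℕ → Omega1, (∀ γ β, β < γ → ∀ i, s γ i < γ) ∧
    (∀ γ β, β < γ → ∃ i, s γ i = β) := by
  have : ∀ γ : Omega1, ∃ f : ℕ → Omega1, (∀ β, β < γ → ∀ i, f i < γ) ∧
      (∀ β, β < γ → ∃ i, f i = β) := by
    intro γ
    by_cases h : (Set.Iio γ).Nonempty
    · have hc : (Set.Iio γ).Countable :=
        (countable_Iic_Omega1 γ).mono Set.Iio_subset_Iic_self
      obtain ⟨f, hf⟩ := hc.exists_eq_range h
      refine ⟨f, fun β _ i => ?_, fun β hβ => ?_⟩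
      · have : f i ∈ Set.Iio γ := by rw [hf]; exact Set.mem_range_self i
        exact this
      · have : β ∈ Set.range f := by rw [← hf]; exact hβ
        exact this
    · have h' : ∀ β, ¬ β < γ := fun β hβ => h ⟨β, hβ⟩
      exact ⟨fun _ => γ, fun β hβ => absurd hβ (h' β), fun β hβ => absurd hβ (h' β)⟩
  choose s h using this
  exact ⟨s, fun γ => (h γ).1, fun γ => (h γ).2⟩

open Finset in
theorem exists_G (s : Omega1 → ℕ → Omega1) (hs' : ∀ γ β, β < γ → ∃ i, s γ i = β)
    (d : Omega1 → ℕ → ℕ) : ∃ G : Omega1 → ℕ → ℕ, (∀ γ, Monotone (G γ)) ∧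
      (∀ γ n, d γ n ≤ G γ n) ∧ ∀ β γ, β ≤ γ → ∃ N, ∀ n ≥ N, G β n ≤ G γ n := by
  classical
  have wf : WellFounded (fun a b : Omega1 => a < b) := wellFounded_lt
  let body : ∀ γ : Omega1, (∀ β : Omega1, β < γ → ℕ → ℕ) → ℕ → ℕ := fun γ rec n =>
    ∑ i ∈ range (n+1), ∑ k ∈ range (n+1), (d γ k + if h : s γ i < γ then rec (s γ i) h k else 0)
  let G : Omega1 → ℕ → ℕ := wf.fix body
  have hG : ∀ γ n, G γ n = ∑ i ∈ range (n+1), ∑ k ∈ range (n+1),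
      (d γ k + if s γ i < γ then G (s γ i) k else 0) := by
    intro γ n
    have : G γ = body γ (fun β _ => G β) := wf.fix_eq body γ
    rw [this]
    simp only [body, dite_eq_ite]
  have term : ∀ γ n i k, i ≤ n → k ≤ n →
      (d γ k + if s γ i < γ then G (s γ i) k else 0) ≤ G γ n := by
    intro γ n i k hi hk
    rw [hG γ n]
    refine le_trans ?_ (single_le_sum (f := fun i => ∑ k ∈ range (n+1),
      (d γ k + if s γ i < γ then G (s γ i) k else 0)) (fun _ _ => Nat.zero_le _)
      (mem_range.2 (Nat.lt_succ_of_le hi)))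
    exact single_le_sum (f := fun k =>
      (d γ k + if s γ i < γ then G (s γ i) k else 0)) (fun _ _ => Nat.zero_le _)
      (mem_range.2 (Nat.lt_succ_of_le hk))
  refine ⟨G, ?_, ?_, ?_⟩
  · intro γ n n' hn
    rw [hG γ n, hG γ n']
    have hsub : range (n+1) ⊆ range (n'+1) := range_subset_range.2 (by omega)
    refine le_trans (sum_le_sum_of_subset hsub) (sum_le_sum fun i _ => sum_le_sum_of_subset hsub)
  · intro γ n
    exact (Nat.le_add_right _ _).trans (term γ n n n le_rfl le_rfl)
  · intro β γ h
    rcases h.lt_or_eq with h | rfl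
    · obtain ⟨i, hi⟩ := hs' γ β h
      refine ⟨i, fun n hn => ?_⟩
      have := term γ n i n hn le_rfl
      rw [hi, if_pos h] at this
      exact (Nat.le_add_left _ _).trans this
    · exact ⟨0, fun _ _ => le_rfl⟩

open Finset in
theorem exists_F (s : Omega1 → ℕ → Omega1) (hs : ∀ γ β, β < γ → ∀ i, s γ i < γ)
    (hs' : ∀ γ β, β < γ → ∃ i, s γ i = β) (x : Omega1 → Omega1 → ℕ) :
    ∃ (F : Omega1 → Omega1 → ℕ) (k : Omega1 → ℕ → ℕ), (∀ γ, F γ γ = 0) ∧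
      (∀ γ, Monotone (k γ)) ∧ (∀ γ i, i ≤ k γ i) ∧ (∀ γ β, β < γ → ∀ i, x (s γ i) γ ≤ k γ i) ∧
      (∀ γ β, β < γ → ∀ i j, i < j → F (s γ j) (s γ i) ≤ k γ j) ∧
      ∀ γ α, α < γ → ∃ i, α ≤ s γ i ∧ (∀ j < i, s γ j < α) ∧
        F γ α = max (F (s γ i) α) (k γ i) := by
  classical
  have wf : WellFounded (fun a b : Omega1 => a < b) := wellFounded_lt
  have ex : ∀ γ α, α < γ → ∃ i, α ≤ s γ i := fun γ α h => (hs' γ α h).imp fun i hi => hi.ge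
  let body : ∀ γ : Omega1, (∀ β : Omega1, β < γ → Omega1 → ℕ) → Omega1 → ℕ := fun γ rec α =>
    if h : α < γ then
      max (rec (s γ (Nat.find (ex γ α h))) (hs γ α h _) α)
        (∑ j ∈ range (Nat.find (ex γ α h) + 1), (1 + x (s γ j) γ +
          ∑ l ∈ range j, rec (s γ j) (hs γ α h _) (s γ l)))
    else 0
  let F : Omega1 → Omega1 → ℕ := wf.fix body
  let k : Omega1 → ℕ → ℕ := fun γ i => ∑ j ∈ range (i + 1), (1 + x (s γ j) γ +
          ∑ l ∈ range j, F (s γ j) (s γ l))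
  have hF : ∀ γ, F γ = body γ (fun β _ => F β) := fun γ => wf.fix_eq body γ
  have term : ∀ γ i, (1 + x (s γ i) γ + ∑ l ∈ range i, F (s γ i) (s γ l)) ≤ k γ i := by
    intro γ i
    exact single_le_sum (f := fun j => (1 + x (s γ j) γ +
          ∑ l ∈ range j, F (s γ j) (s γ l))) (fun _ _ => Nat.zero_le _) (self_mem_range_succ i)
  refine ⟨F, k, ?_, ?_, ?_, ?_, ?_, ?_⟩
  · intro γ
    rw [hF]; simp [body]
  · intro γ i j hij
    exact sum_le_sum_of_subset (range_subset_range.2 (by omega))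
  · intro γ i
    have : ∑ j ∈ range (i+1), 1 ≤ k γ i := sum_le_sum fun j _ => by omega
    simp at this
    omega
  · intro γ β h i
    have := term γ i
    omega
  · intro γ β h i j hij
    have h1 := term γ j
    have h2 := single_le_sum (f := fun l => F (s γ j) (s γ l)) (fun _ _ => Nat.zero_le _)
      (mem_range.2 hij)
    omega
  · intro γ α h
    refine ⟨Nat.find (ex γ α h), Nat.find_spec (ex γ α h), ?_, ?_⟩
    · intro j hj
      exact not_le.1 (Nat.find_min (ex γ α h) hj)
    · rw [hF γ]
      simp only [body, dif_pos h, k]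

theorem F_inv (g : Omega1 → ℕ → ℕ) (hg : ∀ β γ, β ≤ γ → ∃ N, ∀ n ≥ N, g β n ≤ g γ n) :
    ∃ F : Omega1 → Omega1 → ℕ, ∀ γ,
      (∀ α β, α ≤ β → β ≤ γ → F γ α ≤ max (F β α) (F γ β) ∧ F β α ≤ max (F γ α) (F γ β)) ∧
      (∀ m, {α | α ≤ γ ∧ F γ α ≤ m}.Finite) ∧
      (∀ β, β ≤ γ → ∀ n, g β n ≤ max (g γ n) (F γ β)) := by
  classical
  obtain ⟨s, hs, hs'⟩ := exists_s
  have hx : ∀ β γ, ∃ x, β ≤ γ → ∀ n, g β n ≤ max (g γ n) x := by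
    intro β γ
    by_cases h : β ≤ γ
    · obtain ⟨N, hN⟩ := hg β γ h
      refine ⟨∑ n ∈ Finset.range N, g β n, fun _ n => ?_⟩
      rcases lt_or_ge n N with c | c
      · exact le_max_of_le_right (Finset.single_le_sum (f := g β) (fun _ _ => Nat.zero_le _)
          (Finset.mem_range.2 c))
      · exact le_max_of_le_left (hN n c)
    · exact ⟨0, fun h' => absurd h' h⟩
  choose x hx using hx
  obtain ⟨F, k, F0, kmono, ki, kx, kF, hF⟩ := exists_F s hs hs' x
  refine ⟨F, fun γ => ?_⟩
  induction γ using WellFoundedLT.induction with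
  | ind γ ih =>
  refine ⟨?_, ?_, ?_⟩
  · intro α β hab hbg
    rcases hab.lt_or_eq with hab | rfl
    swap
    · simp [F0]
    rcases hbg.lt_or_eq with hbg | rfl
    swap
    · simp
    obtain ⟨i, i1, i2, i3⟩ := hF γ α (hab.trans hbg)
    obtain ⟨j, j1, j2, j3⟩ := hF γ β hbg
    have hij : i ≤ j := by
      by_contra hc
      exact absurd (i2 j (not_le.1 hc)) (not_lt_of_ge (hab.le.trans j1))
    have hlt := hs γ β hbg
    obtain ⟨a1, a2⟩ := (ih _ (hlt j)).1 α β hab.le j1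
    rcases hij.lt_or_eq with hij | rfl
    · have := kmono γ hij.le
      have := kF γ β hbg i j hij
      obtain ⟨b1, b2⟩ := (ih _ (hlt j)).1 α (s γ i) i1 ((j2 i hij).le.trans j1)
      rw [i3, j3]
      constructor <;> omega
    · rw [i3, j3]
      constructor <;> omega
  · intro m
    by_cases hne : ∃ β, β < γ
    · obtain ⟨β, hβ⟩ := hne
      have hfin : (insert γ (⋃ i ∈ Set.Iic m, {α | α ≤ s γ i ∧ F (s γ i) α ≤ m})).Finite :=
        ((Set.finite_Iic m).biUnion fun i _ => (ih _ (hs γ β hβ i)).2.1 m).insert _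
      refine hfin.subset ?_
      rintro α ⟨h1, h2⟩
      rcases h1.lt_or_eq with h1 | rfl
      · right
        obtain ⟨i, i1, i2, i3⟩ := hF γ α h1
        have := ki γ i
        refine Set.mem_biUnion (x := i) (Set.mem_Iic.2 (by omega)) ⟨i1, by omega⟩
      · left; rfl
    · refine (Set.finite_singleton γ).subset ?_
      rintro α ⟨h1, h2⟩
      rcases h1.lt_or_eq with h1 | rfl
      · exact absurd ⟨_, h1⟩ hne
      · rfl
  · intro β hbg n
    rcases hbg.lt_or_eq with hbg | rfl
    · obtain ⟨i, i1, i2, i3⟩ := hF γ β hbg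
      have h1 := (ih _ (hs γ β hbg i)).2.2 β i1 n
      have h2 := hx (s γ i) γ (hs γ β hbg i).le n
      have h3 := kx γ β hbg i
      rw [i3]
      omega
    · simp

theorem exists_enum (D : Set (ℕ → ℕ)) (hD : Cardinal.mk D = Cardinal.aleph 1) :
    ∃ d : Omega1 → ℕ → ℕ, ∀ f ∈ D, ∃ γ, d γ = f := by
  have : Cardinal.lift.{1, 0} (Cardinal.mk D) = Cardinal.lift.{0, 1} (Cardinal.mk Omega1) := by
    rw [mk_Omega1, hD]; simp
  obtain ⟨e⟩ := Cardinal.lift_mk_eq'.1 this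
  exact ⟨fun γ => e.symm γ, fun f hf => ⟨e ⟨f, hf⟩, by simp⟩⟩

/-- if `𝔡 = ℵ₁`, i.e. there is a dominating family of functions
`ω → ω` of cardinality `ℵ₁`, then there exists a map `ρ` such that `(K, ⊴_ρ)`
is a maximal 3-ladder. -/
theorem exists_K_maximal_of_d_eq_aleph_one
    (hd : ∃ D : Set (ℕ → ℕ), IsDominating D ∧ Cardinal.mk D = Cardinal.aleph 1) :
    ∃ ρ : Omega1 → Omega1 → ℕ → ℕ,
      (∀ α : Omega1, ∀ n : ℕ, ρ α α n = 0) ∧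
      RelIsMaximalNLadder (KRel ρ) 3 := by
  classical
  obtain ⟨D, hD, hc⟩ := hd
  obtain ⟨d, hd⟩ := exists_enum D hc
  obtain ⟨s, hs, hs'⟩ := exists_s
  obtain ⟨G, Gm, Gd, Gi⟩ := exists_G s hs' d
  obtain ⟨F, hF⟩ := F_inv G Gi
  let ρ : Omega1 → Omega1 → ℕ → ℕ := fun α γ n => if α < γ then max (F γ α) (G γ n) else 0
  have r1 : ∀ {α γ}, α < γ → ∀ n, ρ α γ n = max (F γ α) (G γ n) := fun h n => if_pos h
  have r0 : ∀ α n, ρ α α n = 0 := fun α n => if_neg (lt_irrefl _)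
  have good : GoodRho ρ := by
    refine ⟨r0, ?_, ?_, ?_, ?_, ?_⟩
    · intro α β n n' hn
      have := Gm β hn
      simp only [ρ]
      split_ifs
      · omega
      · omega
    · intro α β γ n hab hbg
      rcases hab.lt_or_eq with hab | rfl
      swap
      · simp
      rcases hbg.lt_or_eq with hbg | rfl
      swap
      · simp
      rw [r1 hab, r1 hbg, r1 (hab.trans hbg)]
      have := ((hF γ).1 α β hab.le hbg.le).1
      omega
    · intro α β γ n hab hbg
      rcases hab.lt_or_eq with hab | rfl
      swap
      · simp [r0]
      rcases hbg.lt_or_eq with hbg | rfl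
      swap
      · simp
      rw [r1 hab, r1 hbg, r1 (hab.trans hbg)]
      have := ((hF γ).1 α β hab.le hbg.le).2
      have := (hF γ).2.2 β hbg.le n
      omega
    · intro α β γ n hab hbg
      rcases hab.lt_or_eq with hab | rfl
      swap
      · simp
      rcases hbg.lt_or_eq with hbg | rfl
      swap
      · simp [r0]
      rw [r1 hbg, r1 hbg, r1 (hab.trans hbg)]
      omega
    · intro β m
      refine (((hF β).2.1 m).insert β).subset ?_
      rintro α ⟨h1, h2⟩
      rcases h1.lt_or_eq with h1 | rfl
      · right
        rw [r1 h1] at h2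
        exact ⟨h1.le, by omega⟩
      · left; rfl
  refine ⟨ρ, r0, maximal_of good ?_⟩
  intro α δ f
  obtain ⟨g, hg, hdom⟩ := hD (fun n => f n + G (max α δ) n)
  obtain ⟨γ, rfl⟩ := hd g hg
  obtain ⟨N, hN⟩ := Filter.eventually_atTop.1 hdom
  have hlt : max α δ < γ := by
    by_contra hcon
    obtain ⟨M, hM⟩ := Gi γ (max α δ) (not_lt.1 hcon)
    have h1 := hM (max M N) (le_max_left _ _)
    have h2 := hN (max M N) (le_max_right _ _)
    have h3 := Gd γ (max M N)
    omega
  refine ⟨γ, (le_max_right _ _).trans_lt hlt, N, fun n hn => ?_⟩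
  rw [r1 ((le_max_left _ _).trans_lt hlt)]
  have h2 := hN n hn
  have h3 := Gd γ n
  omega
end

section
/- If 𝔡 = ℵ1, i.e., there exists a dominating family of functions ω → ω of cardinality ℵ1, then there exists a maximal 3-ladder of cardinality ℵ1. -/
/-- `P` is a maximal `n`-ladder: an `n`-ladder which is not order-isomorphic to
a proper ideal of any `n`-ladder. -/
def IsMaximalNLadder (P : Type u) [Lattice P] (n : ℕ) : Prop :=
  IsNLadder P n ∧
    ¬ ∃ (Q : Type u) (_ : Lattice Q) (I : Order.Ideal Q),
        IsNLadder Q n ∧ I.IsProper ∧ Nonempty (P ≃o ↥I)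

open Cardinal Set

lemma exists_Om : ∃ (Ω : Type) (_ : LinearOrder Ω), WellFoundedLT Ω ∧ (∀ b : Ω, (Iio b).Countable) ∧ #Ω = aleph 1 := by
  refine ⟨(aleph 1).ord.ToType, inferInstance, inferInstance, fun b => ?_, by simp⟩
  have := Cardinal.mk_Iio_toType_ord_lt b
  rw [Cardinal.countable_iff_lt_aleph_one]
  exact this

section
variable {Ω : Type} [LinearOrder Ω] [WellFoundedLT Ω]

open Classical in
noncomputable def downF (b : Ω) (ih : ∀ a, a < b → ℕ → Set (Ω × ℕ)) : ℕ → Set (Ω × ℕ) :=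
  if h : ∃ d : ℕ → Ω × ℕ, (∀ n, (d n).1 < b) ∧
      (∀ n, ∃ h : (d (n+1)).1 < b, d n ∈ ih (d (n+1)).1 h (d (n+1)).2) ∧
      ∀ x : Ω × ℕ, x.1 < b → ∃ n, ∃ h : (d n).1 < b, x ∈ ih (d n).1 h (d n).2
  then fun n => {x | x.1 = b ∧ x.2 ≤ n} ∪
      {x | ∃ h' : (h.choose n).1 < b, x ∈ ih (h.choose n).1 h' (h.choose n).2}
  else fun n => {x | x.1 = b ∧ x.2 ≤ n}

noncomputable def down : Ω → ℕ → Set (Ω × ℕ) :=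
  (wellFounded_lt (α := Ω)).fix downF

def leK (x y : Ω × ℕ) : Prop := x ∈ down y.1 y.2

lemma leK_dich (b : Ω) :
  (∃ d : ℕ → Ω × ℕ, (∀ n, (d n).1 < b) ∧ (∀ n, leK (d n) (d (n+1))) ∧
    (∀ x : Ω × ℕ, x.1 < b → ∃ n, leK x (d n)) ∧
    ∀ x n, leK x (b, n) ↔ (x.1 = b ∧ x.2 ≤ n) ∨ leK x (d n)) ∨
  ((¬ ∃ d : ℕ → Ω × ℕ, (∀ n, (d n).1 < b) ∧ (∀ n, leK (d n) (d (n+1))) ∧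
    (∀ x : Ω × ℕ, x.1 < b → ∃ n, leK x (d n))) ∧
    ∀ x n, leK x (b, n) ↔ (x.1 = b ∧ x.2 ≤ n)) := by
  have hd : down b = downF b (fun a _ => down a) := by
    unfold down; rw [WellFounded.fix_eq]
  by_cases h : ∃ d : ℕ → Ω × ℕ, (∀ n, (d n).1 < b) ∧
      (∀ n, ∃ _ : (d (n+1)).1 < b, d n ∈ down (d (n+1)).1 (d (n+1)).2) ∧
      ∀ x : Ω × ℕ, x.1 < b → ∃ n, ∃ _ : (d n).1 < b, x ∈ down (d n).1 (d n).2
  · left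
    have hs := h.choose_spec
    refine ⟨h.choose, hs.1, fun n => (hs.2.1 n).2, fun x hx => ?_, fun x n => ?_⟩
    · obtain ⟨n, _, hn⟩ := hs.2.2 x hx
      exact ⟨n, hn⟩
    · show x ∈ down b n ↔ _
      rw [hd, downF, dif_pos h]
      constructor
      · rintro (hx | ⟨_, hx⟩)
        · exact Or.inl hx
        · exact Or.inr hx
      · rintro (hx | hx)
        · exact Or.inl hx
        · exact Or.inr ⟨hs.1 n, hx⟩
  · right
    refine ⟨fun ⟨d, h1, h2, h3⟩ => h ⟨d, h1, fun n => ⟨h1 _, h2 n⟩, fun x hx => ?_⟩, fun x n => ?_⟩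
    · obtain ⟨n, hn⟩ := h3 x hx
      exact ⟨n, h1 n, hn⟩
    · show x ∈ down b n ↔ _
      rw [hd, downF, dif_neg h]
      rfl

lemma leK_fst {x y : Ω × ℕ} : leK x y → x.1 ≤ y.1 := by
  obtain ⟨b, n⟩ := y
  induction b using WellFoundedLT.induction generalizing x n with
  | ind b ih =>
    intro h
    rcases leK_dich b with ⟨d, h1, h2, h3, h4⟩ | ⟨_, h4⟩
    · rcases (h4 x n).1 h with h | h
      · exact h.1.le
      · exact (ih _ (h1 n) _ h).trans (h1 n).le
    · exact ((h4 x n).1 h).1.le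

lemma leK_same {b : Ω} {m n : ℕ} : leK (b, m) (b, n) ↔ m ≤ n := by
  rcases leK_dich b with ⟨d, h1, h2, h3, h4⟩ | ⟨_, h4⟩
  · rw [h4]
    constructor
    · rintro (h | h)
      · exact h.2
      · exact absurd (leK_fst h) (not_le.2 (h1 n))
    · intro h; exact Or.inl ⟨rfl, h⟩
  · rw [h4]; simp

lemma leK_trans {x y z : Ω × ℕ} : leK x y → leK y z → leK x z := by
  obtain ⟨b, n⟩ := z
  induction b using WellFoundedLT.induction generalizing x y n with
  | ind b ih =>
    intro hxy hyz
    rcases leK_dich b with ⟨d, h1, h2, h3, h4⟩ | ⟨_, h4⟩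
    · have key : ∀ k n, k ≤ n → leK x (d k) → leK x (d n) := by
        intro k n hkn hx
        induction n, hkn using Nat.le_induction with
        | base => exact hx
        | succ n _ ihn => exact ih _ (h1 (n+1)) _ ihn (h2 n)
      rw [h4]
      rcases (h4 y n).1 hyz with h | h
      · obtain ⟨y1, y2⟩ := y
        obtain ⟨rfl, h⟩ := h
        rcases (h4 x _).1 hxy with h' | h'
        · exact Or.inl ⟨h'.1, h'.2.trans h⟩
        · exact Or.inr (key _ _ h h')
      · exact Or.inr (ih _ (h1 n) _ hxy h)
    · rw [h4] at hyz ⊢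
      obtain ⟨y1, y2⟩ := y
      obtain ⟨rfl, h⟩ := hyz
      have := (h4 x _).1 hxy
      exact ⟨this.1, this.2.trans h⟩

lemma leK_seq (hc : ∀ b : Ω, (Iio b).Countable) (b : Ω) (hb : ∃ a, a < b) :
    ∃ d : ℕ → Ω × ℕ, (∀ n, (d n).1 < b) ∧ (∀ n, leK (d n) (d (n+1))) ∧
    (∀ x : Ω × ℕ, x.1 < b → ∃ n, leK x (d n)) ∧
    ∀ x n, leK x (b, n) ↔ (x.1 = b ∧ x.2 ≤ n) ∨ leK x (d n) := by
  induction b using WellFoundedLT.induction with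
  | ind b ih =>
    rcases leK_dich b with h | ⟨h, _⟩
    · exact h
    exfalso
    apply h
    have dir0 : ∀ x y : Ω × ℕ, x.1 < b → y.1 < b → x.1 ≤ y.1 → ∃ z : Ω × ℕ, z.1 < b ∧ leK x z ∧ leK y z := by
      rintro ⟨x1, x2⟩ ⟨y1, y2⟩ hx hy hxy
      rcases hxy.eq_or_lt with rfl | hlt
      · exact ⟨(x1, max x2 y2), hx, leK_same.2 (le_max_left _ _), leK_same.2 (le_max_right _ _)⟩
      · obtain ⟨d, h1, h2, h3, h4⟩ := ih y1 hy ⟨_, hlt⟩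
        obtain ⟨n, hn⟩ := h3 (x1, x2) hlt
        refine ⟨(y1, max n y2), hy, ?_, leK_same.2 (le_max_right _ _)⟩
        exact leK_trans ((h4 _ n).2 (Or.inr hn)) (leK_same.2 (le_max_left _ _))
    have dir : ∀ x y : {x : Ω × ℕ // x.1 < b}, ∃ z : {x : Ω × ℕ // x.1 < b}, leK x.1 z.1 ∧ leK y.1 z.1 := by
      rintro ⟨x, hx⟩ ⟨y, hy⟩
      rcases le_total x.1 y.1 with h | h
      · obtain ⟨z, hz, h1, h2⟩ := dir0 x y hx hy h
        exact ⟨⟨z, hz⟩, h1, h2⟩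
      · obtain ⟨z, hz, h1, h2⟩ := dir0 y x hy hx h
        exact ⟨⟨z, hz⟩, h2, h1⟩
    obtain ⟨a, ha⟩ := hb
    have : Countable {x : Ω × ℕ // x.1 < b} := by
      have := ((hc b).prod (Set.countable_univ (α := ℕ)))
      have h2 : {x : Ω × ℕ | x.1 < b}.Countable := by
        refine this.mono ?_
        intro x hx
        exact Set.mem_prod.2 ⟨hx, trivial⟩
      exact h2.to_subtype
    have : Nonempty {x : Ω × ℕ // x.1 < b} := ⟨⟨(a, 0), ha⟩⟩
    obtain ⟨e, he⟩ := exists_surjective_nat {x : Ω × ℕ // x.1 < b}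
    choose j hj1 hj2 using dir
    let d : ℕ → {x : Ω × ℕ // x.1 < b} := fun n => Nat.rec (e 0) (fun n p => j p (e (n+1))) n
    refine ⟨fun n => (d n).1, fun n => (d n).2, fun n => hj1 _ _, fun x hx => ?_⟩
    obtain ⟨n, hn⟩ := he ⟨x, hx⟩
    refine ⟨n, ?_⟩
    have hx' : x = (e n).1 := by rw [hn]
    rw [hx']
    cases n with
    | zero => exact leK_same.2 le_rfl
    | succ n => exact hj2 _ _

lemma leK_finite (x : Ω × ℕ) : {y | leK y x}.Finite := by
  obtain ⟨b, n⟩ := x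
  induction b using WellFoundedLT.induction generalizing n with
  | ind b ih =>
    have h0 : {y : Ω × ℕ | y.1 = b ∧ y.2 ≤ n}.Finite := by
      refine ((Set.finite_singleton b).prod (Set.finite_Iic n)).subset ?_
      rintro y ⟨h1, h2⟩
      exact ⟨h1, h2⟩
    rcases leK_dich b with ⟨d, h1, h2, h3, h4⟩ | ⟨_, h4⟩
    · refine (h0.union (ih _ (h1 n) (d n).2)).subset ?_
      intro y hy
      exact (h4 y n).1 hy
    · refine h0.subset ?_
      intro y hy
      exact (h4 y n).1 hy

lemma leK_antisymm {x y : Ω × ℕ} (h1 : leK x y) (h2 : leK y x) : x = y := by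
  have := le_antisymm (leK_fst h1) (leK_fst h2)
  obtain ⟨x1, x2⟩ := x
  obtain ⟨y1, y2⟩ := y
  obtain rfl : x1 = y1 := this
  rw [le_antisymm (leK_same.1 h1) (leK_same.1 h2)]

lemma leK_step {x y z : Ω × ℕ} (hxy : x.1 < y.1) {k : ℕ} (hm : y.2 ≤ k)
    (hk : ∀ j, y.2 ≤ j → leK x (y.1, j) → k ≤ j) :
    leK x z → leK y z → leK (y.1, k) z := by
  obtain ⟨b, n⟩ := z
  induction b using WellFoundedLT.induction generalizing n with
  | ind b ih =>
    intro hx hy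
    rcases eq_or_ne y.1 b with rfl | hne
    · have : y.2 ≤ n := (leK_same (b := y.1) (m := y.2)).1 hy
      exact leK_same.2 (hk n this hx)
    · have hyb : y.1 < b := lt_of_le_of_ne (leK_fst hy) hne
      rcases leK_dich b with ⟨d, h1, h2, h3, h4⟩ | ⟨_, h4⟩
      · rw [h4] at hx hy ⊢
        rcases hx with hx | hx
        · exact absurd hx.1 (hxy.trans hyb).ne
        rcases hy with hy | hy
        · exact absurd hy.1 hne
        exact Or.inr (ih _ (h1 n) _ hx hy)
      · exact absurd ((h4 _ _).1 hy).1 hne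

lemma leK_sup0 (hc : ∀ b : Ω, (Iio b).Countable) (x y : Ω × ℕ) (hxy : x.1 ≤ y.1) :
    ∃ z, leK x z ∧ leK y z ∧ ∀ w, leK x w → leK y w → leK z w := by
  classical
  rcases hxy.eq_or_lt with h | hlt
  · obtain ⟨x1, x2⟩ := x
    obtain ⟨y1, y2⟩ := y
    obtain rfl : x1 = y1 := h
    rcases le_total x2 y2 with h | h
    · exact ⟨(x1, y2), leK_same.2 h, leK_same.2 le_rfl, fun w _ h => h⟩
    · exact ⟨(x1, x2), leK_same.2 le_rfl, leK_same.2 h, fun w h _ => h⟩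
  · obtain ⟨d, h1, h2, h3, h4⟩ := leK_seq hc y.1 ⟨_, hlt⟩
    obtain ⟨n, hn⟩ := h3 x hlt
    have hex : ∃ j, y.2 ≤ j ∧ leK x (y.1, j) :=
      ⟨max n y.2, le_max_right _ _, leK_trans ((h4 _ n).2 (Or.inr hn)) (leK_same.2 (le_max_left _ _))⟩
    have hs := Nat.find_spec hex
    exact ⟨(y.1, Nat.find hex), hs.2, (leK_same (b := y.1) (m := y.2)).2 hs.1,
      fun w => leK_step hlt hs.1 (fun j hj1 hj2 => Nat.find_min' hex ⟨hj1, hj2⟩)⟩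

lemma leK_sup (hc : ∀ b : Ω, (Iio b).Countable) (x y : Ω × ℕ) :
    ∃ z, leK x z ∧ leK y z ∧ ∀ w, leK x w → leK y w → leK z w := by
  rcases le_total x.1 y.1 with h | h
  · exact leK_sup0 hc x y h
  · obtain ⟨z, h1, h2, h3⟩ := leK_sup0 hc y x h
    exact ⟨z, h2, h1, fun w a b => h3 w b a⟩

lemma leK_bot (hc : ∀ b : Ω, (Iio b).Countable) (o : Ω) (ho : ∀ a, o ≤ a) (x : Ω × ℕ) : leK (o, 0) x := by
  obtain ⟨b, n⟩ := x
  induction b using WellFoundedLT.induction generalizing n with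
  | ind b ih =>
    rcases (ho b).eq_or_lt with rfl | h
    · exact leK_same.2 (Nat.zero_le _)
    · obtain ⟨d, h1, h2, h3, h4⟩ := leK_seq hc b ⟨_, h⟩
      exact (h4 _ _).2 (Or.inr (ih _ (h1 n) _))

lemma leK_cov (x : Ω × ℕ) : ∃ a b, ∀ w, leK w x → w ≠ x →
    (leK w a ∧ leK a x ∧ a ≠ x) ∨ (leK w b ∧ leK b x ∧ b ≠ x) := by
  obtain ⟨c, n⟩ := x
  rcases leK_dich c with ⟨d, h1, h2, h3, h4⟩ | ⟨_, h4⟩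
  · refine ⟨(c, n - 1), d n, fun w hw hne => ?_⟩
    rcases (h4 _ _).1 hw with h | h
    · left
      obtain ⟨w1, w2⟩ := w
      obtain ⟨rfl, h⟩ := h
      have : w2 ≠ n := fun h => hne (by rw [h])
      simp only at h
      refine ⟨leK_same.2 (by omega), leK_same.2 (by omega), fun h => ?_⟩
      have := congrArg Prod.snd h
      simp only at this
      omega
    · right
      refine ⟨h, (h4 _ _).2 (Or.inr ((leK_same (b := (d n).1)).2 le_rfl)), fun h => ?_⟩
      have := h1 n
      rw [h] at this
      exact lt_irrefl _ this
  · refine ⟨(c, n - 1), (c, n-1), fun w hw hne => ?_⟩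
    have h := (h4 _ _).1 hw
    left
    obtain ⟨w1, w2⟩ := w
    obtain ⟨rfl, h⟩ := h
    have : w2 ≠ n := fun h => hne (by rw [h])
    simp only at h
    refine ⟨leK_same.2 (by omega), leK_same.2 (by omega), fun h => ?_⟩
    have := congrArg Prod.snd h
    simp only at this
    omega
end

lemma lattice_of (K : Type) (le : K → K → Prop) (refl : ∀ x, le x x)
    (trans : ∀ x y z, le x y → le y z → le x z) (anti : ∀ x y, le x y → le y x → x = y)
    (fin : ∀ x, {y | le y x}.Finite) (o : K) (bot : ∀ x, le o x)
    (sup : ∀ x y, ∃ z, le x z ∧ le y z ∧ ∀ w, le x w → le y w → le z w) :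
    ∃ i : Lattice K, ∀ x y, i.le x y ↔ le x y := by
  have hfs : ∀ s : Finset K, ∃ z, (∀ x ∈ s, le x z) ∧ ∀ w, (∀ x ∈ s, le x w) → le z w := by
    classical
    intro s
    induction s using Finset.induction_on with
    | empty => exact ⟨o, by simp, fun w _ => bot w⟩
    | insert a s _ ih =>
      obtain ⟨z, h1, h2⟩ := ih
      obtain ⟨v, h3, h4, h5⟩ := sup a z
      refine ⟨v, ?_, ?_⟩
      · intro x hx
        rcases Finset.mem_insert.1 hx with rfl | hx
        · exact h3
        · exact trans _ _ _ (h1 x hx) h4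
      · intro w hw
        exact h5 w (hw a (Finset.mem_insert_self _ _)) (h2 w fun x hx => hw x (Finset.mem_insert_of_mem hx))
  have inf : ∀ x y, ∃ z, le z x ∧ le z y ∧ ∀ w, le w x → le w y → le w z := by
    intro x y
    have hf : ({w | le w x} ∩ {w | le w y}).Finite := (fin x).inter_of_left _
    obtain ⟨z, h1, h2⟩ := hfs hf.toFinset
    refine ⟨z, h2 x ?_, h2 y ?_, fun w a b => h1 w ?_⟩
    · intro w hw
      simp at hw; exact hw.1
    · intro w hw
      simp at hw; exact hw.2
    · simp; exact ⟨a, b⟩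
  choose S S1 S2 S3 using sup
  choose T T1 T2 T3 using inf
  exact ⟨{ le := le, le_refl := refl, le_trans := trans, le_antisymm := anti,
           sup := S, le_sup_left := S1, le_sup_right := S2,
           sup_le := fun a b c h1 h2 => S3 a b c h1 h2,
           inf := T, inf_le_left := T1, inf_le_right := T2,
           le_inf := fun a b c h1 h2 => T3 b c a h1 h2 }, fun _ _ => Iff.rfl⟩

lemma exists_two_ladder : ∃ (K : Type) (_ : Lattice K), (∀ x : K, (Iic x).Finite) ∧
    (∀ x : K, ∃ a b, ∀ w < x, (w ≤ a ∧ a < x) ∨ (w ≤ b ∧ b < x)) ∧ #K = aleph 1 := by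
  obtain ⟨Ω, _, _, hc, hΩ⟩ := exists_Om
  have hne : Nonempty Ω := by
    rw [← Cardinal.mk_ne_zero_iff, hΩ]
    exact (Cardinal.aleph_pos 1).ne'
  obtain ⟨o, -, ho⟩ := (wellFounded_lt (α := Ω)).has_min univ ⟨hne.some, trivial⟩
  have ho : ∀ a, o ≤ a := fun a => not_lt.1 (ho a trivial)
  obtain ⟨i, hi⟩ := lattice_of (Ω × ℕ) leK (fun x => (leK_same (b := x.1)).2 le_rfl)
    (fun _ _ _ => leK_trans) (fun _ _ => leK_antisymm) leK_finite (o, 0) (leK_bot hc o ho) (leK_sup hc)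
  refine ⟨Ω × ℕ, i, fun x => ?_, fun x => ?_, ?_⟩
  · exact (leK_finite x).subset fun y hy => (hi _ _).1 hy
  · obtain ⟨a, b, h⟩ := leK_cov x
    refine ⟨a, b, fun w hw => ?_⟩
    have := h w ((hi _ _).1 (@le_of_lt _ i.toPreorder _ _ hw)) (@ne_of_lt _ i.toPreorder _ _ hw)
    rcases this with ⟨h1, h2, h3⟩ | ⟨h1, h2, h3⟩
    · exact Or.inl ⟨(hi _ _).2 h1, @lt_of_le_of_ne _ i.toPartialOrder _ _ ((hi _ _).2 h2) h3⟩
    · exact Or.inr ⟨(hi _ _).2 h1, @lt_of_le_of_ne _ i.toPartialOrder _ _ ((hi _ _).2 h2) h3⟩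
  · simp [hΩ]

lemma exists_guess (K : Type) (hK : #K = aleph 1) (D : Set (ℕ → ℕ)) (hD : IsDominating D)
    (hD1 : #D = aleph 1) : ∃ t : K → K → ℕ, ∀ x : ℕ → K, (∀ z, ∃ M, ∀ m ≥ M, x m ≠ z) →
      ∃ q M, ∀ m ≥ M, m < t q (x m) := by
  obtain ⟨Ω, _, _, hc, hΩ⟩ := exists_Om
  obtain ⟨E⟩ : Nonempty (K ≃ Ω) := Cardinal.eq.1 (hK.trans hΩ.symm)
  have hKD : #K = #(Ω × D) := by
    rw [hK, Cardinal.mk_prod, hΩ, hD1]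
    simp [Cardinal.mul_eq_self (Cardinal.aleph0_le_aleph 1)]
  obtain ⟨Φ⟩ : Nonempty (K ≃ Ω × D) := Cardinal.eq.1 hKD
  have hcK : ∀ b : Ω, {x : K | E x ≤ b}.Countable := by
    intro b
    have : (Iic b).Countable := by
      rw [← Set.Iio_union_right]
      exact (hc b).union (Set.countable_singleton b)
    exact this.preimage E.injective
  have he : ∀ b : Ω, ∃ e : K → ℕ, InjOn e {x : K | E x ≤ b} := fun b =>
    (Set.countable_iff_exists_injOn).1 (hcK b)
  choose e he using he
  refine ⟨fun q z => (Φ q).2.1 (e (Φ q).1 z), fun x hx => ?_⟩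
  obtain ⟨b, hb⟩ : ∃ b : Ω, ∀ m, E (x m) ≤ b := by
    by_contra hcon
    push Not at hcon
    have h1 : (⋃ m, Iio (E (x m))).Countable := Set.countable_iUnion fun m => hc _
    have h2 : (⋃ m, Iio (E (x m))) = Set.univ := by
      refine Set.eq_univ_of_forall fun b => ?_
      obtain ⟨m, hm⟩ := hcon b
      exact Set.mem_iUnion.2 ⟨m, hm⟩
    rw [h2] at h1
    have h3 := (Cardinal.countable_iff_lt_aleph_one _).1 h1
    rw [Cardinal.mk_univ, hΩ] at h3
    exact lt_irrefl _ h3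
  have hlim : ∀ i : ℕ, ∃ M, ∀ m ≥ M, i < e b (x m) := by
    intro i
    have hfin : {z : K | E z ≤ b ∧ e b z ≤ i}.Finite := by
      refine Set.Finite.of_finite_image (f := e b) ((Set.finite_Iic i).subset ?_) ?_
      · rintro _ ⟨z, hz, rfl⟩; exact hz.2
      · exact (he b).mono fun z hz => hz.1
    choose M hM using hx
    obtain ⟨N, hN⟩ := (hfin.image M).bddAbove
    refine ⟨N, fun m hm => ?_⟩
    by_contra hle
    have hmem : x m ∈ {z : K | E z ≤ b ∧ e b z ≤ i} := ⟨hb m, not_lt.1 hle⟩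
    exact hM (x m) m ((hN ⟨_, hmem, rfl⟩).trans hm) rfl
  choose h hh using hlim
  obtain ⟨g, hg, hdom⟩ := hD h
  obtain ⟨i0, hi0⟩ := Filter.eventually_atTop.1 hdom
  refine ⟨Φ.symm (b, ⟨g, hg⟩), h i0, fun m hm => ?_⟩
  simp only [Equiv.apply_symm_apply]
  by_contra hle
  have h1 := hi0 _ (hh i0 m hm).le
  have h2 := hh (e b (x m)) m (by omega)
  exact lt_irrefl _ h2

lemma breadth_four {Q : Type} [Lattice Q] (hQ : IsNLadder Q 3) (T : Q) (a : Fin 4 → Q)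
    (ha : ∀ i, a i < T) (hj : ∀ i j, i ≠ j → T ≤ a i ⊔ a j) : False := by
  obtain ⟨-, hfin, hcov⟩ := hQ
  have hex : ∀ i, ∃ z, a i ≤ z ∧ z ⋖ T := by
    intro i
    have hf : (Ico (a i) T).Finite := (hfin T).subset fun y hy => hy.2.le
    obtain ⟨z, hz1, hz2⟩ := hf.exists_le_maximal (a := a i) ⟨le_rfl, ha i⟩
    refine ⟨z, hz1, hz2.prop.2, fun w hw1 hw2 => ?_⟩
    exact absurd (hz2.le_of_ge ⟨hz1.trans hw1.le, hw2⟩ hw1.le) (not_le_of_gt hw1)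
  choose z hz1 hz2 using hex
  have hinj : Function.Injective z := by
    intro i j hij
    by_contra hne
    have h1 := hj i j hne
    have h2 : a i ⊔ a j ≤ z i := sup_le (hz1 i) (hij ▸ hz1 j)
    exact absurd (h1.trans h2) (not_le_of_gt (hz2 i).lt)
  have hf : {y : Q | y ⋖ T}.Finite := (hfin T).subset fun y hy => hy.lt.le
  have h1 : (Set.range z).ncard ≤ {y : Q | y ⋖ T}.ncard :=
    Set.ncard_le_ncard (by rintro _ ⟨i, rfl⟩; exact hz2 i) hf
  have h2 : (Set.range z).ncard = 4 := by
    rw [← Set.image_univ, Set.ncard_image_of_injective _ hinj, Set.ncard_univ]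
    simp
  have := hcov T
  omega

lemma exists_closure {L Q : Type} [Lattice L] [Lattice Q] (I : Order.Ideal Q)
    (hQ : IsNLadder Q 3) (hI : I.IsProper) (φ : L ≃o ↥I) :
    ∃ c : L → L, (∀ x, x ≤ c x) ∧ (∀ x y, x ≤ c y → c x ≤ c y) ∧
      ∀ x y z, c (x ⊔ y ⊔ z) ≤ c (x ⊔ y) ∨ c (x ⊔ y ⊔ z) ≤ c (x ⊔ z) ∨ c (x ⊔ y ⊔ z) ≤ c (y ⊔ z) := by
  obtain ⟨q, hq⟩ : ∃ q, q ∉ I := by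
    by_contra h
    push Not at h
    exact hI.ne_univ (Set.eq_univ_of_forall h)
  let ι : L → Q := fun x => (φ x : Q)
  have hle : ∀ x y, ι x ≤ ι y ↔ x ≤ y := fun x y => φ.le_iff_le
  have hI' : ∀ x, ι x ∈ I := fun x => (φ x).2
  have hsup : ∀ x y, ι (x ⊔ y) = ι x ⊔ ι y := by
    intro x y
    apply le_antisymm
    · have hm : ι x ⊔ ι y ∈ I := Order.Ideal.sup_mem (hI' x) (hI' y)
      have h1 : x ⊔ y ≤ φ.symm ⟨ι x ⊔ ι y, hm⟩ := by
        apply sup_le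
        · rw [← hle]; simp [ι]
        · rw [← hle]; simp [ι]
      have h2 := (hle _ _).2 h1
      simpa [ι] using h2
    · exact sup_le ((hle _ _).2 le_sup_left) ((hle _ _).2 le_sup_right)
  have hmax : ∀ x, ∃ y, ι y ≤ ι x ⊔ q ∧ ∀ w, ι w ≤ ι x ⊔ q → w ≤ y := by
    intro x
    have hf : {y : L | ι y ≤ ι x ⊔ q}.Finite := by
      refine Set.Finite.of_finite_image (f := ι) ((hQ.2.1 (ι x ⊔ q)).subset ?_) ?_
      · rintro _ ⟨y, hy, rfl⟩; exact hy
      · intro a _ b _ hab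
        exact le_antisymm ((hle _ _).1 hab.le) ((hle _ _).1 hab.ge)
    obtain ⟨y, hy⟩ := hf.exists_maximal ⟨x, le_sup_left⟩
    refine ⟨y, hy.prop, fun w hw => ?_⟩
    have h1 : ι (y ⊔ w) ≤ ι x ⊔ q := by rw [hsup]; exact sup_le hy.prop hw
    exact le_sup_right.trans (hy.le_of_ge h1 le_sup_left)
  choose c hc1 hc2 using hmax
  have hmono : ∀ x y, ι x ≤ ι y ⊔ q → c x ≤ c y := fun x y h =>
    hc2 y _ ((hc1 x).trans (sup_le h le_sup_right))
  refine ⟨c, fun x => hc2 x x le_sup_left, fun x y h => hmono x y (((hle _ _).2 h).trans (hc1 y)), ?_⟩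
  intro x y z
  by_contra hcon
  push Not at hcon
  obtain ⟨h1, h2, h3⟩ := hcon
  have key : ∀ w, w ≤ x ⊔ y ⊔ z → ¬ c (x ⊔ y ⊔ z) ≤ c w → ι w ⊔ q < ι (x ⊔ y ⊔ z) ⊔ q := by
    intro w hw hn
    refine lt_of_le_not_ge (sup_le_sup_right ((hle _ _).2 hw) _) fun h => hn (hmono _ _ (le_sup_left.trans h))
  have k1 := key (x ⊔ y) le_sup_left h1
  have k2 := key (x ⊔ z) (sup_le (le_sup_left.trans le_sup_left) le_sup_right) h2
  have k3 := key (y ⊔ z) (sup_le (le_sup_right.trans le_sup_left) le_sup_right) h3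
  have k0 : ι (x ⊔ y ⊔ z) < ι (x ⊔ y ⊔ z) ⊔ q := by
    refine lt_of_le_not_ge le_sup_left fun h => hq ?_
    exact I.lower (le_sup_right.trans h) (hI' _)
  simp only [hsup] at k0 k1 k2 k3
  refine breadth_four hQ (ι x ⊔ ι y ⊔ ι z ⊔ q)
    ![ι x ⊔ ι y ⊔ ι z, ι x ⊔ ι y ⊔ q, ι x ⊔ ι z ⊔ q, ι y ⊔ ι z ⊔ q] ?_ ?_
  · intro i
    fin_cases i
    · exact k0
    · exact k1
    · exact k2
    · exact k3
  · have a1 : ∀ u v : Q, ι x ≤ u ⊔ v → ι y ≤ u ⊔ v → ι z ≤ u ⊔ v → q ≤ u ⊔ v →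
        ι x ⊔ ι y ⊔ ι z ⊔ q ≤ u ⊔ v := fun u v h1 h2 h3 h4 => sup_le (sup_le (sup_le h1 h2) h3) h4
    intro i j hij
    fin_cases i <;> fin_cases j <;> first | exact absurd rfl hij | skip
    all_goals
      refine a1 _ _ ?_ ?_ ?_ ?_ <;>
      first
      | exact le_sup_of_le_left (le_sup_of_le_left le_sup_left)
      | exact le_sup_of_le_left (le_sup_of_le_left le_sup_right)
      | exact le_sup_of_le_left le_sup_right
      | exact le_sup_of_le_right (le_sup_of_le_left le_sup_left)
      | exact le_sup_of_le_right (le_sup_of_le_left le_sup_right)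
      | exact le_sup_of_le_right le_sup_right

abbrev Lad {K : Type} (r : K → ℕ) : Type := {p : K × ℕ // r p.1 ≤ p.2}

@[reducible] def ladLattice {K : Type} [Lattice K] (r : K → ℕ) (hr : Monotone r) : Lattice (Lad r) :=
  { (inferInstance : PartialOrder (Lad r)) with
    sup := fun a b => ⟨(a.1.1 ⊔ b.1.1, max (max a.1.2 b.1.2) (r (a.1.1 ⊔ b.1.1))), le_max_right _ _⟩
    le_sup_left := fun a b => ⟨le_sup_left, (le_max_left _ _).trans (le_max_left _ _)⟩
    le_sup_right := fun a b => ⟨le_sup_right, (le_max_right _ _).trans (le_max_left _ _)⟩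
    sup_le := fun a b d h1 h2 => ⟨sup_le h1.1 h2.1,
      max_le (max_le h1.2 h2.2) ((hr (sup_le h1.1 h2.1)).trans d.2)⟩
    inf := fun a b => ⟨(a.1.1 ⊓ b.1.1, min a.1.2 b.1.2),
      le_min ((hr inf_le_left).trans a.2) ((hr inf_le_right).trans b.2)⟩
    inf_le_left := fun a b => ⟨inf_le_left, min_le_left _ _⟩
    inf_le_right := fun a b => ⟨inf_le_right, min_le_right _ _⟩
    le_inf := fun a b d h1 h2 => ⟨le_inf h1.1 h2.1, le_min h1.2 h2.2⟩ }

lemma lad_ladder {K : Type} [Lattice K] [Nonempty K] (r : K → ℕ) (hr : Monotone r)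
    (hfin : ∀ x : K, (Iic x).Finite)
    (hcov : ∀ x : K, ∃ a b, ∀ w < x, (w ≤ a ∧ a < x) ∨ (w ≤ b ∧ b < x)) :
    @IsNLadder (Lad r) (ladLattice r hr) 3 := by
  letI := ladLattice r hr
  refine ⟨⟨⟨(Classical.arbitrary K, r (Classical.arbitrary K)), le_rfl⟩⟩, fun x => ?_, fun x => ?_⟩
  · refine Set.Finite.of_finite_image (f := Subtype.val)
      (((hfin x.1.1).prod (Set.finite_Iic x.1.2)).subset ?_) Subtype.val_injective.injOn
    rintro _ ⟨y, hy, rfl⟩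
    exact ⟨hy.1, hy.2⟩
  · obtain ⟨a, b, hab⟩ := hcov x.1.1
    have hsub : Subtype.val '' {y : Lad r | y ⋖ x} ⊆ {(a, x.1.2), (b, x.1.2), (x.1.1, x.1.2 - 1)} := by
      rintro _ ⟨y, hy, rfl⟩
      obtain ⟨hlt, hno⟩ := hy
      have hle : y.1.1 ≤ x.1.1 ∧ y.1.2 ≤ x.1.2 := hlt.le
      have main : ∀ z : K, y.1.1 ≤ z → z < x.1.1 → y.1 = (z, x.1.2) := by
        intro z hz1 hz2
        let v : Lad r := ⟨(z, x.1.2), (hr hz2.le).trans x.2⟩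
        have hv : v < x := lt_of_le_of_ne ⟨hz2.le, le_rfl⟩ fun h => hz2.ne (congrArg (fun p => p.1.1) h)
        have hyv : y ≤ v := ⟨hz1, hle.2⟩
        by_contra hne
        exact hno (lt_of_le_of_ne hyv fun h => hne (by rw [h])) hv
      rcases hle.1.eq_or_lt with h | h
      · right; right
        have hn : y.1.2 ≠ x.1.2 := fun h' => hlt.ne (Subtype.ext (Prod.ext h h'))
        have hlt2 : y.1.2 < x.1.2 := lt_of_le_of_ne hle.2 hn
        let v : Lad r := ⟨(x.1.1, x.1.2 - 1), by
          have := y.2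
          rw [h] at this
          show r x.1.1 ≤ x.1.2 - 1
          omega⟩
        have hv : v < x := lt_of_le_of_ne ⟨le_rfl, Nat.sub_le _ _⟩ fun h => by
          have : x.1.2 - 1 = x.1.2 := congrArg (fun p => p.1.2) h
          omega
        have hyv : y ≤ v := ⟨hle.1, show y.1.2 ≤ x.1.2 - 1 by omega⟩
        by_contra hne
        exact hno (lt_of_le_of_ne hyv fun h => hne (by rw [h]; rfl)) hv
      · rcases hab _ h with ⟨h1, h2⟩ | ⟨h1, h2⟩
        · left; exact main a h1 h2
        · right; left; exact main b h1 h2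
    rw [← Set.ncard_image_of_injective _ Subtype.val_injective]
    refine (Set.ncard_le_ncard hsub (Set.toFinite _)).trans ?_
    refine (Set.ncard_insert_le _ _).trans ?_
    have h2 := Set.ncard_insert_le (b, x.1.2) {(x.1.1, x.1.2 - 1)}
    rw [Set.ncard_singleton] at h2
    omega

lemma lad_no_closure {K : Type} [Lattice K] (r : K → ℕ) (hr : Monotone r)
    (hfin : ∀ x : K, (Iic x).Finite) (hK : #K = aleph 1) (t : K → K → ℕ)
    (hrt : ∀ x, ∀ y ≤ x, ∀ z ≤ x, t y z ≤ r x)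
    (ht : ∀ x : ℕ → K, (∀ z, ∃ M, ∀ m ≥ M, x m ≠ z) → ∃ q M, ∀ m ≥ M, m < t q (x m))
    (c : Lad r → Lad r) (hc1 : ∀ x, x ≤ c x) (hc2 : ∀ x y, x ≤ c y → c x ≤ c y)
    (hc3 : letI := ladLattice r hr
      ∀ x y z, c (x ⊔ y ⊔ z) ≤ c (x ⊔ y) ∨ c (x ⊔ y ⊔ z) ≤ c (x ⊔ z) ∨ c (x ⊔ y ⊔ z) ≤ c (y ⊔ z)) :
    False := by
  letI := ladLattice r hr
  replace hc3 : ∀ x y z, c (x ⊔ y ⊔ z) ≤ c (x ⊔ y) ∨ c (x ⊔ y ⊔ z) ≤ c (x ⊔ z) ∨ c (x ⊔ y ⊔ z) ≤ c (y ⊔ z) := hc3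
  let p : K → ℕ → Lad r := fun y m => ⟨(y, max m (r y)), le_max_right _ _⟩
  have hsup1 : ∀ a b : Lad r, (a ⊔ b).1.1 = a.1.1 ⊔ b.1.1 := fun _ _ => rfl
  have hmono : ∀ x y, x ≤ y → c x ≤ c y := fun x y h => hc2 x y (h.trans (hc1 y))
  have hpm : ∀ y m n, m ≤ n → p y m ≤ p y n := fun y m n h => ⟨le_rfl, max_le_max_right _ h⟩
  by_cases hcase : ∀ y, ∃ B, ∀ m, (c (p y m)).1.1 ≤ B
  · choose B hB using hcase
    have key : ∀ y z, z ≤ B y ∨ y ≤ B z := by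
      intro y z
      let a := p y 0
      let b := p z 0
      let m := (c (a ⊔ b)).1.2 + 1 + r (y ⊔ z)
      have hm1 : r y ≤ m := (hr (le_sup_left (b := z))).trans (Nat.le_add_left _ _)
      have hm2 : r z ≤ m := (hr (le_sup_right (a := y))).trans (Nat.le_add_left _ _)
      have hm3 : r (y ⊓ z) ≤ m := (hr inf_le_left).trans hm1
      let d := p (y ⊓ z) m
      have had : a ⊔ d ≤ p y m := by
        apply sup_le
        · exact hpm _ _ _ (Nat.zero_le _)
        · exact ⟨inf_le_left, show max m (r (y ⊓ z)) ≤ max m (r y) by omega⟩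
      have hbd : b ⊔ d ≤ p z m := by
        apply sup_le
        · exact hpm _ _ _ (Nat.zero_le _)
        · exact ⟨inf_le_right, show max m (r (y ⊓ z)) ≤ max m (r z) by omega⟩
      have hle : a ⊔ b ⊔ d ≤ c (a ⊔ b ⊔ d) := hc1 _
      have hy : y ≤ (c (a ⊔ b ⊔ d)).1.1 := ((le_sup_left.trans le_sup_left).trans hle : a ≤ _).1
      have hz : z ≤ (c (a ⊔ b ⊔ d)).1.1 := ((le_sup_right.trans le_sup_left).trans hle : b ≤ _).1
      rcases hc3 a b d with h | h | h
      · exfalso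
        have h1 : d ≤ c (a ⊔ b) := (le_sup_right.trans hle).trans h
        have h2 : max m (r (y ⊓ z)) ≤ (c (a ⊔ b)).1.2 := h1.2
        have h3 : m ≤ (c (a ⊔ b)).1.2 := (le_max_left _ _).trans h2
        simp only [m] at h3
        omega
      · left
        exact (hz.trans (h.trans (hmono _ _ had)).1).trans (hB y m)
      · right
        exact (hy.trans (h.trans (hmono _ _ hbd)).1).trans (hB z m)
    have hinf : Infinite K := by
      rw [Cardinal.infinite_iff, hK]; exact Cardinal.aleph0_le_aleph 1
    let s : ℕ ↪ K := Infinite.natEmbedding K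
    obtain ⟨z, hz⟩ : ∃ z, ∀ n, ¬ z ≤ B (s n) := by
      by_contra hcon
      push Not at hcon
      have h1 : (⋃ n, Iic (B (s n))).Countable := Set.countable_iUnion fun n => (hfin _).countable
      have h2 : (⋃ n, Iic (B (s n))) = Set.univ := by
        refine Set.eq_univ_of_forall fun z => ?_
        obtain ⟨n, hn⟩ := hcon z
        exact Set.mem_iUnion.2 ⟨n, hn⟩
      rw [h2] at h1
      have h3 := (Cardinal.countable_iff_lt_aleph_one _).1 h1
      rw [Cardinal.mk_univ, hK] at h3
      exact lt_irrefl _ h3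
    have hall : ∀ n, s n ∈ Iic (B z) := fun n => (key (s n) z).resolve_left (hz n)
    exact Set.infinite_range_of_injective s.injective
      ((hfin (B z)).subset (by rintro _ ⟨n, rfl⟩; exact hall n))
  · push Not at hcase
    obtain ⟨y, hy⟩ := hcase
    obtain ⟨q, M, hqM⟩ := ht (fun m => (c (p y m)).1.1) (by
      intro z
      obtain ⟨M, hM⟩ := hy z
      refine ⟨M, fun m hm h => hM ?_⟩
      rw [← h]
      exact (hmono _ _ (hpm y _ _ hm)).1)
    let w := p q 0 ⊔ p y M
    let u := c w
    let m := u.1.2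
    have hyu : p y M ≤ u := le_sup_right.trans (hc1 w)
    have hqu : q ≤ u.1.1 := (le_sup_left.trans (hc1 w) : p q 0 ≤ u).1
    have hMm : max M (r y) ≤ m := hyu.2
    have hpu : p y m ≤ u := ⟨hyu.1, max_le le_rfl ((le_max_right _ _).trans hMm)⟩
    have hcu : c (p y m) ≤ u := hc2 _ _ hpu
    have h1 := hqM m ((le_max_left _ _).trans hMm)
    have h2 := hrt u.1.1 q hqu _ hcu.1
    have h3 : r u.1.1 ≤ m := u.2
    omega

/-- if `𝔡 = ℵ₁`, i.e. there is a dominating family of functions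
`ω → ω` of cardinality `ℵ₁`, then there exists a maximal 3-ladder of
cardinality `ℵ₁`. -/
theorem exists_maximal_three_ladder_of_d_eq_aleph_one
    (hd : ∃ D : Set (ℕ → ℕ), IsDominating D ∧ Cardinal.mk D = Cardinal.aleph 1) :
    ∃ (L : Type) (_ : Lattice L), IsMaximalNLadder L 3 ∧
      Cardinal.mk L = Cardinal.aleph 1 := by
  obtain ⟨D, hD, hD1⟩ := hd
  obtain ⟨K, _, hfin, hcov, hK⟩ := exists_two_ladder
  obtain ⟨t, ht⟩ := exists_guess K hK D hD hD1
  have hne : Nonempty K := by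
    rw [← Cardinal.mk_ne_zero_iff, hK]
    exact (Cardinal.aleph_pos 1).ne'
  let r : K → ℕ := fun x => ((hfin x).toFinset ×ˢ (hfin x).toFinset).sup fun p => t p.1 p.2
  have hr : Monotone r := by
    intro x y hxy
    apply Finset.sup_mono
    apply Finset.product_subset_product <;>
    · intro z hz
      simp at hz ⊢
      exact hz.trans hxy
  have hrt : ∀ x, ∀ y ≤ x, ∀ z ≤ x, t y z ≤ r x := by
    intro x y hy z hz
    exact Finset.le_sup (s := (hfin x).toFinset ×ˢ (hfin x).toFinset)
      (f := fun p : K × K => t p.1 p.2) (b := (y, z)) (by simp [hy, hz])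
  refine ⟨Lad r, ladLattice r hr, ⟨lad_ladder r hr hfin hcov, ?_⟩, ?_⟩
  · rintro ⟨Q, _, I, hQ, hI, ⟨φ⟩⟩
    letI := ladLattice r hr
    obtain ⟨c, h1, h2, h3⟩ := exists_closure I hQ hI φ
    exact lad_no_closure r hr hfin hK t hrt ht c h1 h2 h3
  · apply le_antisymm
    · refine (Cardinal.mk_subtype_le _).trans ?_
      simp [hK]
    · rw [← hK]
      refine Cardinal.mk_le_of_injective (f := fun x : K => (⟨(x, r x), le_rfl⟩ : Lad r)) ?_
      intro x y h
      exact congrArg (fun p : Lad r => p.1.1) h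
end
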